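/- arXiv:1703.10283 — 4 statements merged into one kernel-verified Lean document; each statement's English description precedes it below -/
import Mathlib

section
/- Let g : ℝ → (0,∞) be a strictly positive probability density. Let U and V be random vectors in ℝ^k defined on a common probability space, with joint characteristic function φ_{U,V}(s,t) = E[exp(i(⟨s,U⟩ + ⟨t,V⟩))] and marginal characteristic functions φ_U(s) = E[exp(i⟨s,U⟩)], φ_V(t) = E[exp(i⟨t,V⟩)]. Then ∫_{ℝ^k}∫_{ℝ^k} |φ_{U,V}(s,t) − φ_U(s)φ_V(t)|² ∏_{j=1}^k g(s_j)g(t_j) ds dt = 0 if and only if U and V are independent. -/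
open MeasureTheory

/-! Since `g > 0`, the integral vanishes iff the integrand does almost everywhere. The difference of
characteristic functions is continuous and Lebesgue measure charges every nonempty open set, so the
difference then vanishes identically, which by uniqueness of characteristic functions is
independence. -/

section

open ProbabilityTheory
open scoped Matrix

theorem lintegral_norm_pow_mul_eq_zero_iff {X E : Type*} [TopologicalSpace X] [MeasurableSpace X]
    [OpensMeasurableSpace X] [NormedAddCommGroup E] {μ : Measure X} [μ.IsOpenPosMeasure]
    {f : X → E} (hf : Continuous f) {w : X → ℝ} (hw : AEMeasurable w μ)
    (hw_pos : ∀ᵐ x ∂μ, 0 < w x) {n : ℕ} (hn : n ≠ 0) :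
    ∫⁻ x, ENNReal.ofReal (‖f x‖ ^ n * w x) ∂μ = 0 ↔ f = 0 := by
  have h_meas : AEMeasurable (fun x ↦ ENNReal.ofReal (‖f x‖ ^ n * w x)) μ :=
    ((hf.norm.pow n).measurable.aemeasurable.mul hw).ennreal_ofReal
  rw [lintegral_eq_zero_iff' h_meas, ← hf.ae_eq_iff_eq μ continuous_zero]
  refine Filter.eventually_congr (hw_pos.mono fun x hx ↦ ?_)
  simp [hn, hx.not_ge]

section CharFunDual

variable {E F : Type*} [NormedAddCommGroup E] [NormedSpace ℝ E] [MeasurableSpace E]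
  [NormedAddCommGroup F] [NormedSpace ℝ F] [MeasurableSpace F]

theorem continuous_charFunDual [OpensMeasurableSpace E] (μ : Measure E) [IsFiniteMeasure μ] :
    Continuous (charFunDual μ) := by
  refine continuous_of_dominated (bound := fun _ ↦ 1)
    (fun L ↦ (BoundedContinuousFunction.probCharDual L).integrable μ |>.aestronglyMeasurable)
    (fun L ↦ .of_forall fun x ↦ ?_) (integrable_const 1) (.of_forall fun x ↦ ?_)
  · rw [BoundedContinuousFunction.probCharDual_apply, Complex.norm_exp_ofReal_mul_I]
  · simp only [BoundedContinuousFunction.probCharDual_apply]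
    fun_prop

variable {Ω : Type*} [MeasurableSpace Ω] {P : Measure Ω} {X : Ω → E} {Y : Ω → F}

theorem charFunDual_map_eq_integral [OpensMeasurableSpace E] (hX : AEMeasurable X P)
    (L : StrongDual ℝ E) :
    charFunDual (P.map X) L = ∫ ω, Complex.exp (Complex.I * (L (X ω) : ℂ)) ∂P := by
  rw [charFunDual_apply, integral_map hX (by fun_prop)]
  simp only [mul_comm Complex.I]

/-- The difference `φ_{X,Y} - φ_X φ_Y` between the joint characteristic function of `X`, `Y` and the
product of the marginal ones; the frequency is a continuous linear form `L` on `E × F`, which stands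
for the pair of its restrictions to `E` and `F`. -/
noncomputable def charFunDefect (P : Measure Ω) (X : Ω → E) (Y : Ω → F)
    (L : StrongDual ℝ (E × F)) : ℂ :=
  charFunDual (P.map fun ω ↦ (X ω, Y ω)) L -
    charFunDual (P.map X) (L.comp (.inl ℝ E F)) * charFunDual (P.map Y) (L.comp (.inr ℝ E F))

theorem continuous_charFunDefect [IsFiniteMeasure P] [OpensMeasurableSpace E]
    [OpensMeasurableSpace F] [SecondCountableTopologyEither E F] :
    Continuous (charFunDefect P X Y) :=
  (continuous_charFunDual _).sub <|
    ((continuous_charFunDual _).comp (by fun_prop)).mul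
      ((continuous_charFunDual _).comp (by fun_prop))

theorem charFunDefect_eq_zero_iff_indepFun [IsFiniteMeasure P]
    [BorelSpace E] [SecondCountableTopology E] [CompleteSpace E]
    [BorelSpace F] [SecondCountableTopology F] [CompleteSpace F]
    (hX : AEMeasurable X P) (hY : AEMeasurable Y P) :
    charFunDefect P X Y = 0 ↔ IndepFun X Y P := by
  simp only [indepFun_iff_charFunDual_prod hX hY, funext_iff, charFunDefect, Pi.zero_apply,
    sub_eq_zero]

end CharFunDual

section Pi

variable {ι κ : Type*} [Fintype ι] [Fintype κ]

variable (ι) in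
open Classical in
/-- The dot product identifies frequency vectors `s ∈ ℝ^ι` with continuous linear forms
`u ↦ ⟨s, u⟩`. It is used instead of the Riesz isomorphism because `ι → ℝ` carries the sup norm. -/
noncomputable def dotProductDual : (ι → ℝ) ≃L[ℝ] StrongDual ℝ (ι → ℝ) :=
  ((dotProductEquiv ℝ ι).trans LinearMap.toContinuousLinearMap).toContinuousLinearEquiv

variable (ι κ) in
/-- Pairs of frequency vectors `(s, t)` as the continuous linear forms
`(u, v) ↦ ⟨s, u⟩ + ⟨t, v⟩` on `ℝ^ι × ℝ^κ`. -/
noncomputable def dotProductDualProd :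
    ((ι → ℝ) × (κ → ℝ)) ≃L[ℝ] StrongDual ℝ ((ι → ℝ) × (κ → ℝ)) :=
  ((dotProductDual ι).prodCongr (dotProductDual κ)).trans
    (ContinuousLinearMap.coprodEquivL ℝ)

@[simp]
theorem dotProductDualProd_apply (p q : (ι → ℝ) × (κ → ℝ)) :
    dotProductDualProd ι κ p q = p.1 ⬝ᵥ q.1 + p.2 ⬝ᵥ q.2 := rfl

variable {Ω : Type*} [MeasurableSpace Ω] {P : Measure Ω} {U : Ω → ι → ℝ} {V : Ω → κ → ℝ}

theorem charFunDefect_dotProductDualProd (hU : AEMeasurable U P) (hV : AEMeasurable V P)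
    (s : ι → ℝ) (t : κ → ℝ) :
    charFunDefect P U V (dotProductDualProd ι κ (s, t)) =
      (∫ ω, Complex.exp (Complex.I * ((s ⬝ᵥ U ω + t ⬝ᵥ V ω : ℝ) : ℂ)) ∂P) -
        (∫ ω, Complex.exp (Complex.I * ((s ⬝ᵥ U ω : ℝ) : ℂ)) ∂P) *
          (∫ ω, Complex.exp (Complex.I * ((t ⬝ᵥ V ω : ℝ) : ℂ)) ∂P) := by
  simp [charFunDefect, charFunDual_map_eq_integral, hU, hV, hU.prodMk hV]

theorem distance_covariance_zero_iff_indep_general [IsFiniteMeasure P]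
    (hU : AEMeasurable U P) (hV : AEMeasurable V P) {w : (ι → ℝ) × (κ → ℝ) → ℝ}
    (hw : AEMeasurable w) (hw_pos : ∀ᵐ p, 0 < w p) :
    ∫⁻ s, ∫⁻ t, ENNReal.ofReal
        (‖(∫ ω, Complex.exp (Complex.I * ((s ⬝ᵥ U ω + t ⬝ᵥ V ω : ℝ) : ℂ)) ∂P) -
          (∫ ω, Complex.exp (Complex.I * ((s ⬝ᵥ U ω : ℝ) : ℂ)) ∂P) *
            (∫ ω, Complex.exp (Complex.I * ((t ⬝ᵥ V ω : ℝ) : ℂ)) ∂P)‖ ^ 2 * w (s, t)) = 0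
      ↔ IndepFun U V P := by
  have h_cont : Continuous fun p ↦ charFunDefect P U V (dotProductDualProd ι κ p) :=
    continuous_charFunDefect.comp (dotProductDualProd ι κ).continuous
  have h_meas : AEMeasurable fun p ↦
      ENNReal.ofReal (‖charFunDefect P U V (dotProductDualProd ι κ p)‖ ^ 2 * w p) :=
    ((h_cont.norm.pow 2).measurable.aemeasurable.mul hw).ennreal_ofReal
  simp_rw [← charFunDefect_dotProductDualProd hU hV]
  rw [← lintegral_prod _ h_meas, ← Measure.volume_eq_prod,
    lintegral_norm_pow_mul_eq_zero_iff h_cont hw hw_pos two_ne_zero,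
    ← charFunDefect_eq_zero_iff_indepFun hU hV]
  simp only [funext_iff, (dotProductDualProd ι κ).surjective.forall, Pi.zero_apply]

end Pi

end

/-- For a strictly positive probability density `g` on `ℝ` and random
vectors `U, V : Ω → ℝ^k` on a common probability space, the weighted squared distance
between the joint characteristic function and the product of the marginal characteristic
functions vanishes iff `U` and `V` are independent (joint law = product of marginal laws). -/
theorem distance_covariance_zero_iff_indep
    {Ω : Type*} [MeasurableSpace Ω] (ℙ : Measure Ω) [IsProbabilityMeasure ℙ]
    {k : ℕ} (hk : 1 ≤ k) (U V : Ω → (Fin k → ℝ))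
    (hU : Measurable U) (hV : Measurable V)
    (g : ℝ → ℝ) (hg : Measurable g) (hg_pos : ∀ s, 0 < g s)
    (hg_int : (∫ s, g s) = 1) :
    (∫⁻ (s : Fin k → ℝ), ∫⁻ (t : Fin k → ℝ),
        ENNReal.ofReal
          (‖(∫ ω, Complex.exp (Complex.I *
                ((∑ j, (s j * U ω j + t j * V ω j) : ℝ) : ℂ)) ∂ℙ) -
              (∫ ω, Complex.exp (Complex.I * ((∑ j, s j * U ω j : ℝ) : ℂ)) ∂ℙ) *
              (∫ ω, Complex.exp (Complex.I * ((∑ j, t j * V ω j : ℝ) : ℂ)) ∂ℙ)‖ ^ 2 *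
            ∏ j, g (s j) * g (t j))) = 0
      ↔ Measure.map (fun ω => (U ω, V ω)) ℙ
          = (Measure.map U ℙ).prod (Measure.map V ℙ) := by
  rw [← ProbabilityTheory.indepFun_iff_map_prod_eq_prod_map_map hU.aemeasurable hV.aemeasurable]
  simpa only [dotProduct, Finset.sum_add_distrib] using
    distance_covariance_zero_iff_indep_general hU.aemeasurable hV.aemeasurable
      (w := fun p ↦ ∏ j, g (p.1 j) * g (p.2 j)) (by fun_prop)
      (.of_forall fun p ↦ Finset.prod_pos fun j _ ↦ mul_pos (hg_pos _) (hg_pos _))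
end

section
/- Let g : ℝ → (0,∞) be a strictly positive probability density. Then d_g(X,Y) = 0 if and only if the joint law of (X,Y) on C([0,1],ℝ) × C([0,1],ℝ) equals the product of the law of X and the law of Y, i.e., if and only if X and Y are independent. -/
open MeasureTheory
open scoped unitInterval ENNReal

/-- The joint characteristic function of the finite-dimensional distribution of the pair
of processes `(X, Y)` at the points `x 0, …, x (k-1)` of `[0,1]`:
`φ_{X,Y}(x; s, t) = E[exp(i Σ_j (s_j X(x_j) + t_j Y(x_j)))]`. -/
noncomputable def jointCF {Ω : Type*} [MeasurableSpace Ω] (ℙ : Measure Ω)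
    (X Y : Ω → C(I, ℝ)) {k : ℕ} (x : Fin k → I) (s t : Fin k → ℝ) : ℂ :=
  ∫ ω, Complex.exp (Complex.I * ((∑ j, (s j * X ω (x j) + t j * Y ω (x j)) : ℝ) : ℂ)) ∂ℙ

/-- The characteristic function of the finite-dimensional distribution of the process `X`
at the points `x 0, …, x (k-1)` of `[0,1]`: `φ_X(x; s) = E[exp(i Σ_j s_j X(x_j))]`. -/
noncomputable def margCF {Ω : Type*} [MeasurableSpace Ω] (ℙ : Measure Ω)
    (X : Ω → C(I, ℝ)) {k : ℕ} (x : Fin k → I) (s : Fin k → ℝ) : ℂ :=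
  ∫ ω, Complex.exp (Complex.I * ((∑ j, s j * X ω (x j) : ℝ) : ℂ)) ∂ℙ

/-- The distance covariance `d_g(X,Y)` of two stochastic processes `X, Y` with continuous
sample paths on `[0,1]`, with weight function `g`:
`d_g(X,Y) = Σ_{k≥1} (e^{-1}/k!) ∫_{[0,1]^k} ∫_{ℝ^{2k}} |φ_{X,Y} - φ_X φ_Y|² Π_j g(s_j)g(t_j) ds dt dx`. -/
noncomputable def distCov {Ω : Type*} [MeasurableSpace Ω] (ℙ : Measure Ω)
    (X Y : Ω → C(I, ℝ)) (g : ℝ → ℝ) : ℝ≥0∞ :=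
  ∑' k : ℕ,
    ENNReal.ofReal (Real.exp (-1) / (Nat.factorial (k + 1) : ℝ)) *
      ∫⁻ (x : Fin (k + 1) → I),
        ∫⁻ (s : Fin (k + 1) → ℝ), ∫⁻ (t : Fin (k + 1) → ℝ),
          ENNReal.ofReal
            (‖jointCF ℙ X Y x s t - margCF ℙ X x s * margCF ℙ Y x t‖ ^ 2 *
              ∏ j, g (s j) * g (t j))

/-! `|φ_{X,Y} - φ_X φ_Y|²` is continuous and Lebesgue measure charges every nonempty open set, so its
integral against an almost everywhere positive weight vanishes only if it vanishes identically.
Hence `d_g(X,Y) = 0` exactly when the characteristic functions of all finite-dimensional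
distributions factorize, i.e. when `(X(x_j))_j` and `(Y(x_j))_j` are independent for all sampling
points `x_j`. As evaluations generate the Borel σ-algebra of the path space, this is independence of
`X` and `Y`. -/

open ProbabilityTheory (IndepFun IndepFun_iff_Indep indepFun_iff_charFun_prod
  indepFun_iff_map_prod_eq_prod_map_map)
open TopologicalSpace (SeparableSpace exists_countable_dense)

section Integration

theorem isOpenPosMeasure_comap_subtype_val {α : Type*} [TopologicalSpace α] [MeasurableSpace α]
    {μ : Measure α} [μ.IsOpenPosMeasure] {s : Set α} (hs : NullMeasurableSet s μ)
    (hsub : s ⊆ closure (interior s)) :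
    (μ.comap ((↑) : s → α)).IsOpenPosMeasure := by
  refine ⟨fun U hU ⟨x, hxU⟩ hμU ↦ ?_⟩
  obtain ⟨V, hV, rfl⟩ := isOpen_induced_iff.1 hU
  have hne : (V ∩ interior s).Nonempty := mem_closure_iff.1 (hsub x.2) V hV hxU
  have hnull : μ (s ∩ V) = 0 := by
    simpa only [Subtype.image_preimage_coe] using
      Measure.measure_subtype_coe_eq_zero_of_comap_eq_zero hs hμU
  have hsub_inter : V ∩ interior s ⊆ s ∩ V := fun y hy ↦ ⟨interior_subset hy.2, hy.1⟩
  exact ((hV.inter isOpen_interior).measure_pos μ hne).ne' (measure_mono_null hsub_inter hnull)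

instance isOpenPosMeasure_volume_unitInterval : (volume : Measure I).IsOpenPosMeasure :=
  isOpenPosMeasure_comap_subtype_val measurableSet_Icc.nullMeasurableSet
    (closure_interior_Icc zero_ne_one).ge

theorem aemeasurable_ofReal_norm_sq_mul {α E : Type*} [TopologicalSpace α] [MeasurableSpace α]
    [OpensMeasurableSpace α] {μ : Measure α} [NormedAddCommGroup E] {f : α → E} (hf : Continuous f)
    {w : α → ℝ} (hw : AEMeasurable w μ) :
    AEMeasurable (fun a ↦ ENNReal.ofReal (‖f a‖ ^ 2 * w a)) μ :=
  ((hf.norm.pow 2).measurable.aemeasurable.mul hw).ennreal_ofReal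

theorem lintegral_norm_sq_mul_eq_zero_iff {α E : Type*} [TopologicalSpace α] [MeasurableSpace α]
    [OpensMeasurableSpace α] {μ : Measure α} [μ.IsOpenPosMeasure] [NormedAddCommGroup E]
    {f : α → E} (hf : Continuous f) {w : α → ℝ} (hw : AEMeasurable w μ)
    (hw_pos : ∀ᵐ a ∂μ, 0 < w a) :
    ∫⁻ a, ENNReal.ofReal (‖f a‖ ^ 2 * w a) ∂μ = 0 ↔ ∀ a, f a = 0 := by
  have hpointwise : ∀ᵐ a ∂μ, ENNReal.ofReal (‖f a‖ ^ 2 * w a) = 0 ↔ f a = 0 := by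
    filter_upwards [hw_pos] with a ha
    rw [ENNReal.ofReal_eq_zero, ← not_lt, mul_pos_iff_of_pos_right ha]
    simp
  calc ∫⁻ a, ENNReal.ofReal (‖f a‖ ^ 2 * w a) ∂μ = 0
      ↔ ∀ᵐ a ∂μ, ENNReal.ofReal (‖f a‖ ^ 2 * w a) = 0 :=
        lintegral_eq_zero_iff' (aemeasurable_ofReal_norm_sq_mul hf hw)
    _ ↔ f =ᵐ[μ] 0 := Filter.eventually_congr hpointwise
    _ ↔ ∀ a, f a = 0 := (hf.ae_eq_iff_eq μ continuous_zero).trans funext_iff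

theorem lintegral_prod_prod {α β γ : Type*} [MeasurableSpace α] [MeasurableSpace β]
    [MeasurableSpace γ] {μ : Measure α} {ν : Measure β} {ρ : Measure γ} [SFinite ν] [SFinite ρ]
    {f : α × β × γ → ℝ≥0∞} (hf : AEMeasurable f (μ.prod (ν.prod ρ))) :
    ∫⁻ p, f p ∂μ.prod (ν.prod ρ) = ∫⁻ a, ∫⁻ b, ∫⁻ c, f (a, b, c) ∂ρ ∂ν ∂μ := by
  rw [lintegral_prod f hf]
  refine lintegral_congr_ae ?_
  filter_upwards [Measure.ae_ae_of_ae_prod hf.ae_eq_mk] with a ha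
  exact lintegral_prod _ ⟨_, hf.measurable_mk.comp measurable_prodMk_left, ha⟩

variable {ι : Type*} [Fintype ι] {α : ι → Type*} [∀ i, MeasurableSpace (α i)]
  {μ : ∀ i, Measure (α i)} [∀ i, SigmaFinite (μ i)] {g : ∀ i, α i → ℝ}

theorem aemeasurable_pi_prod (hg : ∀ i, AEMeasurable (g i) (μ i)) :
    AEMeasurable (fun s ↦ ∏ i, g i (s i)) (Measure.pi μ) :=
  Finset.univ.aemeasurable_fun_prod fun i _ ↦
    (hg i).comp_quasiMeasurePreserving (Measure.quasiMeasurePreserving_eval μ i)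

theorem ae_pi_prod_pos (hg : ∀ i, ∀ᵐ a ∂μ i, 0 < g i a) :
    ∀ᵐ s ∂Measure.pi μ, 0 < ∏ i, g i (s i) := by
  have hcoord : ∀ᵐ s ∂Measure.pi μ, ∀ i, 0 < g i (s i) :=
    ae_all_iff.2 fun i ↦ (Measure.quasiMeasurePreserving_eval μ i).ae (hg i)
  filter_upwards [hcoord] with s hs using Finset.prod_pos fun i _ ↦ hs i

end Integration

section Independence

variable {Ω : Type*} [MeasurableSpace Ω] {P : Measure Ω}

theorem continuous_integral_cexp_I_mul [IsFiniteMeasure P] {T : Type*} [TopologicalSpace T]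
    [FirstCountableTopology T] {f : T → Ω → ℝ} (hf : ∀ p, AEMeasurable (f p) P)
    (hcont : ∀ ω, Continuous fun p ↦ f p ω) :
    Continuous fun p ↦ ∫ ω, Complex.exp (Complex.I * (f p ω : ℂ)) ∂P := by
  refine continuous_of_dominated (bound := fun _ ↦ 1) (fun p ↦ ?_) (fun p ↦ ?_)
    (integrable_const 1) ?_
  · have hfp := hf p
    exact AEMeasurable.aestronglyMeasurable (by fun_prop)
  · exact .of_forall fun ω ↦ by rw [mul_comm, Complex.norm_exp_ofReal_mul_I]
  · exact .of_forall fun ω ↦ by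
      have hfω := hcont ω
      fun_prop

theorem charFun_map [IsFiniteMeasure P] {E : Type*} [NormedAddCommGroup E] [InnerProductSpace ℝ E]
    [MeasurableSpace E] [OpensMeasurableSpace E] [SecondCountableTopology E] {Z : Ω → E}
    (hZ : AEMeasurable Z P) (t : E) :
    charFun (P.map Z) t = ∫ ω, Complex.exp (Complex.I * (inner ℝ (Z ω) t : ℝ)) ∂P := by
  rw [charFun_apply, integral_map hZ (by fun_prop)]
  simp only [mul_comm]

open WithLp in
theorem indepFun_pi_iff_integral_cexp [IsFiniteMeasure P] {ι κ : Type*} [Fintype ι] [Fintype κ]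
    {U : Ω → ι → ℝ} {V : Ω → κ → ℝ} (hU : AEMeasurable U P) (hV : AEMeasurable V P) :
    IndepFun U V P ↔ ∀ (s : ι → ℝ) (t : κ → ℝ),
      ∫ ω, Complex.exp (Complex.I * ((∑ i, s i * U ω i + ∑ j, t j * V ω j : ℝ) : ℂ)) ∂P =
        (∫ ω, Complex.exp (Complex.I * ((∑ i, s i * U ω i : ℝ) : ℂ)) ∂P) *
          ∫ ω, Complex.exp (Complex.I * ((∑ j, t j * V ω j : ℝ) : ℂ)) ∂P := by
  have htoLp : IndepFun U V P ↔ IndepFun (fun ω ↦ toLp 2 (U ω)) (fun ω ↦ toLp 2 (V ω)) P :=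
    ⟨fun h ↦ h.comp (measurable_toLp 2 _) (measurable_toLp 2 _),
      fun h ↦ h.comp (measurable_ofLp 2 _) (measurable_ofLp 2 _)⟩
  rw [htoLp, indepFun_iff_charFun_prod (by fun_prop) (by fun_prop)]
  simp only [charFun_map (by fun_prop : AEMeasurable (fun ω ↦ toLp 2 (U ω)) P),
    charFun_map (by fun_prop : AEMeasurable (fun ω ↦ toLp 2 (V ω)) P),
    charFun_map (by fun_prop : AEMeasurable (fun ω ↦ toLp 2 (toLp 2 (U ω), toLp 2 (V ω))) P),
    prod_inner_apply, PiLp.inner_apply, RCLike.inner_apply, conj_trivial]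
  exact ⟨fun h s t ↦ h (toLp 2 (toLp 2 s, toLp 2 t)), fun h t ↦ h t.fst.ofLp t.snd.ofLp⟩

theorem aemeasurable_continuousMap_eval {α β : Type*} [TopologicalSpace α] [TopologicalSpace β]
    [MeasurableSpace β] [BorelSpace β] [MeasurableSpace C(α, β)] [OpensMeasurableSpace C(α, β)]
    {X : Ω → C(α, β)} (hX : AEMeasurable X P) (a : α) : AEMeasurable (fun ω ↦ X ω a) P :=
  (continuous_eval_const a).measurable.comp_aemeasurable hX

theorem borel_continuousMap_eq_comap_pi {α β : Type*} [TopologicalSpace α] [SeparableSpace α]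
    [TopologicalSpace β] [T2Space β] [SecondCountableTopology β] [MeasurableSpace β] [BorelSpace β]
    [PolishSpace C(α, β)] [MeasurableSpace C(α, β)] [BorelSpace C(α, β)] :
    ‹MeasurableSpace C(α, β)› =
      MeasurableSpace.pi.comap ((⇑) : C(α, β) → α → β) := by
  apply le_antisymm
  · obtain ⟨D, hD_countable, hD_dense⟩ := exists_countable_dense α
    have : Countable D := hD_countable
    let r : (α → β) → D → β := D.domRestrict
    have hr_cont : Continuous fun f : C(α, β) ↦ r f :=
      continuous_pi fun d ↦ continuous_eval_const (d : α)
    have hr_inj : Function.Injective fun f : C(α, β) ↦ r f := fun f g hfg ↦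
      DFunLike.coe_injective <| f.continuous.ext_on hD_dense g.continuous fun d hd ↦
        congrFun hfg ⟨d, hd⟩
    calc ‹MeasurableSpace C(α, β)›
      _ = MeasurableSpace.pi.comap (fun f : C(α, β) ↦ r f) :=
        (hr_cont.measurableEmbedding hr_inj).comap_eq.symm
      _ = (MeasurableSpace.pi.comap r).comap (⇑) := by
        rw [MeasurableSpace.comap_comp, Function.comp_def]
      _ ≤ MeasurableSpace.pi.comap (⇑) :=
        MeasurableSpace.comap_mono (measurable_pi_lambda _ fun d ↦ measurable_pi_apply _).comap_le
  · exact (measurable_pi_lambda _ fun a ↦ (continuous_eval_const a).measurable).comap_le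

theorem indepFun_continuousMap_iff [IsZeroOrProbabilityMeasure P] {α β : Type*} [TopologicalSpace α]
    [SeparableSpace α] [TopologicalSpace β] [T2Space β] [SecondCountableTopology β]
    [MeasurableSpace β] [BorelSpace β] [PolishSpace C(α, β)] [MeasurableSpace C(α, β)]
    [BorelSpace C(α, β)] {X Y : Ω → C(α, β)} (hX : AEMeasurable X P) (hY : AEMeasurable Y P) :
    IndepFun X Y P ↔ ∀ (k : ℕ) (x : Fin k → α),
      IndepFun (fun ω j ↦ X ω (x j)) (fun ω j ↦ Y ω (x j)) P := by
  refine ⟨fun h k x ↦ ?_, fun h ↦ ?_⟩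
  · have hsample : Measurable fun (f : C(α, β)) j ↦ f (x j) :=
      measurable_pi_lambda _ fun j ↦ (continuous_eval_const (x j)).measurable
    exact h.comp hsample hsample
  · have hpaths : IndepFun (fun ω a ↦ X ω a) (fun ω a ↦ Y ω a) P := by
      refine IndepFun.process_indepFun_process₀ (aemeasurable_continuousMap_eval hX)
        (aemeasurable_continuousMap_eval hY) fun S T ↦ ?_
      classical
      let e := (S ∪ T).equivFin
      have hcomp := (h _ fun j ↦ (e.symm j : α)).comp
        (φ := fun v (a : S) ↦ v (e ⟨a, Finset.mem_union_left T a.2⟩))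
        (ψ := fun v (a : T) ↦ v (e ⟨a, Finset.mem_union_right S a.2⟩))
        (by fun_prop) (by fun_prop)
      simpa only [Function.comp_def, Equiv.symm_apply_apply] using hcomp
    rw [IndepFun_iff_Indep] at hpaths ⊢
    rw [borel_continuousMap_eq_comap_pi (α := α) (β := β), MeasurableSpace.comap_comp,
      MeasurableSpace.comap_comp]
    exact hpaths

end Independence

section DistanceCovariance

variable {Ω : Type*} [MeasurableSpace Ω] {P : Measure Ω} [MeasurableSpace C(I, ℝ)]
  [BorelSpace C(I, ℝ)] {X Y : Ω → C(I, ℝ)} {k : ℕ}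

theorem continuous_jointCF [IsFiniteMeasure P] (hX : AEMeasurable X P) (hY : AEMeasurable Y P)
    {T : Type*} [TopologicalSpace T] [FirstCountableTopology T] {x : T → Fin k → I}
    {s t : T → Fin k → ℝ} (hx : Continuous x) (hs : Continuous s) (ht : Continuous t) :
    Continuous fun p ↦ jointCF P X Y (x p) (s p) (t p) := by
  have hXa := aemeasurable_continuousMap_eval hX
  have hYa := aemeasurable_continuousMap_eval hY
  exact continuous_integral_cexp_I_mul (by fun_prop) (by fun_prop)

theorem continuous_margCF [IsFiniteMeasure P] (hX : AEMeasurable X P)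
    {T : Type*} [TopologicalSpace T] [FirstCountableTopology T] {x : T → Fin k → I}
    {s : T → Fin k → ℝ} (hx : Continuous x) (hs : Continuous s) :
    Continuous fun p ↦ margCF P X (x p) (s p) := by
  have hXa := aemeasurable_continuousMap_eval hX
  exact continuous_integral_cexp_I_mul (by fun_prop) (by fun_prop)

theorem indepFun_sample_iff_jointCF_eq_mul [IsFiniteMeasure P] (hX : AEMeasurable X P)
    (hY : AEMeasurable Y P) (x : Fin k → I) :
    IndepFun (fun ω j ↦ X ω (x j)) (fun ω j ↦ Y ω (x j)) P ↔
      ∀ s t, jointCF P X Y x s t = margCF P X x s * margCF P Y x t := by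
  simp only [jointCF, margCF, Finset.sum_add_distrib]
  exact indepFun_pi_iff_integral_cexp
    (aemeasurable_pi_lambda _ fun j ↦ aemeasurable_continuousMap_eval hX (x j))
    (aemeasurable_pi_lambda _ fun j ↦ aemeasurable_continuousMap_eval hY (x j))

variable {g : ℝ → ℝ}

theorem lintegral_jointCF_sub_sq_eq_zero_iff [IsFiniteMeasure P] (hX : AEMeasurable X P)
    (hY : AEMeasurable Y P) (hg : AEMeasurable g) (hg_pos : ∀ᵐ s, 0 < g s) :
    ∫⁻ (x : Fin k → I), ∫⁻ (s : Fin k → ℝ), ∫⁻ (t : Fin k → ℝ),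
        ENNReal.ofReal (‖jointCF P X Y x s t - margCF P X x s * margCF P Y x t‖ ^ 2 *
          ∏ j, g (s j) * g (t j)) = 0 ↔
      ∀ (x : Fin k → I) (s t : Fin k → ℝ),
        jointCF P X Y x s t = margCF P X x s * margCF P Y x t := by
  let f (p : (Fin k → I) × (Fin k → ℝ) × (Fin k → ℝ)) : ℂ :=
    jointCF P X Y p.1 p.2.1 p.2.2 - margCF P X p.1 p.2.1 * margCF P Y p.1 p.2.2
  let w (p : (Fin k → I) × (Fin k → ℝ) × (Fin k → ℝ)) : ℝ :=
    (∏ j, g (p.2.1 j)) * ∏ j, g (p.2.2 j)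
  have hf : Continuous f :=
    (continuous_jointCF hX hY (by fun_prop) (by fun_prop) (by fun_prop)).sub <|
      (continuous_margCF hX (by fun_prop) (by fun_prop)).mul
        (continuous_margCF hY (by fun_prop) (by fun_prop))
  have hw : AEMeasurable w := by
    have hprod : AEMeasurable fun s : Fin k → ℝ ↦ ∏ j, g (s j) := aemeasurable_pi_prod fun _ ↦ hg
    exact (hprod.comp_fst.mul hprod.comp_snd).comp_snd
  have hw_pos : ∀ᵐ p, 0 < w p := by
    have hprod : ∀ᵐ s : Fin k → ℝ, 0 < ∏ j, g (s j) := ae_pi_prod_pos fun _ ↦ hg_pos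
    have hprod₂ : ∀ᵐ q : (Fin k → ℝ) × (Fin k → ℝ), 0 < (∏ j, g (q.1 j)) * ∏ j, g (q.2 j) := by
      filter_upwards [Measure.quasiMeasurePreserving_fst.ae hprod,
        Measure.quasiMeasurePreserving_snd.ae hprod] with q hs ht using mul_pos hs ht
    exact Measure.quasiMeasurePreserving_snd.ae hprod₂
  have hiterated : ∫⁻ p, ENNReal.ofReal (‖f p‖ ^ 2 * w p) =
      ∫⁻ x, ∫⁻ s, ∫⁻ t, ENNReal.ofReal (‖f (x, s, t)‖ ^ 2 * w (x, s, t)) :=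
    lintegral_prod_prod (aemeasurable_ofReal_norm_sq_mul hf hw)
  have hopen_cube : (volume : Measure (Fin k → I)).IsOpenPosMeasure := inferInstance
  simp only [Finset.prod_mul_distrib]
  calc ∫⁻ x, ∫⁻ s, ∫⁻ t, ENNReal.ofReal (‖f (x, s, t)‖ ^ 2 * w (x, s, t)) = 0
      ↔ ∫⁻ p, ENNReal.ofReal (‖f p‖ ^ 2 * w p) = 0 := by rw [hiterated]
    _ ↔ ∀ p, f p = 0 := lintegral_norm_sq_mul_eq_zero_iff hf hw hw_pos
    _ ↔ _ := by simp only [f, Prod.forall, sub_eq_zero]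

theorem distCov_eq_zero_iff_jointCF_eq_mul [IsProbabilityMeasure P] (hX : AEMeasurable X P)
    (hY : AEMeasurable Y P) (hg : AEMeasurable g) (hg_pos : ∀ᵐ s, 0 < g s) :
    distCov P X Y g = 0 ↔ ∀ (k : ℕ) (x : Fin k → I) (s t : Fin k → ℝ),
      jointCF P X Y x s t = margCF P X x s * margCF P Y x t := by
  have hcoeff (k : ℕ) : ENNReal.ofReal (Real.exp (-1) / ((k + 1).factorial : ℝ)) ≠ 0 :=
    (ENNReal.ofReal_pos.2 (by positivity)).ne'
  have hzero (x : Fin 0 → I) (s t : Fin 0 → ℝ) :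
      jointCF P X Y x s t = margCF P X x s * margCF P Y x t := by
    simp [jointCF, margCF]
  simp only [distCov, ENNReal.tsum_eq_zero, mul_eq_zero, hcoeff, false_or,
    lintegral_jointCF_sub_sq_eq_zero_iff hX hY hg hg_pos]
  exact ⟨fun h k ↦ k.casesOn hzero h, fun h k ↦ h (k + 1)⟩

theorem distCov_eq_zero_iff_indep_general [IsProbabilityMeasure P] (hX : AEMeasurable X P)
    (hY : AEMeasurable Y P) (hg : AEMeasurable g) (hg_pos : ∀ᵐ s, 0 < g s) :
    distCov P X Y g = 0 ↔
      Measure.map (fun ω ↦ (X ω, Y ω)) P = (Measure.map X P).prod (Measure.map Y P) := by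
  calc distCov P X Y g = 0
      ↔ ∀ (k : ℕ) (x : Fin k → I) (s t : Fin k → ℝ),
          jointCF P X Y x s t = margCF P X x s * margCF P Y x t :=
        distCov_eq_zero_iff_jointCF_eq_mul hX hY hg hg_pos
    _ ↔ ∀ (k : ℕ) (x : Fin k → I),
          IndepFun (fun ω j ↦ X ω (x j)) (fun ω j ↦ Y ω (x j)) P := by
        simp only [indepFun_sample_iff_jointCF_eq_mul hX hY]
    _ ↔ IndepFun X Y P := (indepFun_continuousMap_iff hX hY).symm
    _ ↔ _ := indepFun_iff_map_prod_eq_prod_map_map hX hY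

end DistanceCovariance

/-- For a strictly positive probability density `g` on `ℝ` and two
processes `X, Y` with continuous paths on `[0,1]` defined on a common probability
space, `d_g(X,Y) = 0` iff `X` and `Y` are independent (the joint law on
`C([0,1],ℝ) × C([0,1],ℝ)` is the product of the marginal laws). -/
theorem distCov_eq_zero_iff_indep
    {Ω : Type*} [MeasurableSpace Ω] (ℙ : Measure Ω) [IsProbabilityMeasure ℙ]
    [MeasurableSpace C(I, ℝ)] [BorelSpace C(I, ℝ)]
    (X Y : Ω → C(I, ℝ)) (hX : Measurable X) (hY : Measurable Y)
    (g : ℝ → ℝ) (hg : Measurable g) (hg_pos : ∀ s, 0 < g s)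
    (hg_int : (∫ s, g s) = 1) :
    distCov ℙ X Y g = 0
      ↔ Measure.map (fun ω => (X ω, Y ω)) ℙ
          = (Measure.map X ℙ).prod (Measure.map Y ℙ) :=
  distCov_eq_zero_iff_indep_general hX.aemeasurable hY.aemeasurable hg.aemeasurable
    (ae_of_all _ hg_pos)
end

section
/- Let g : ℝ → [0,∞) be a probability density with g(−s) = g(s) for all s ∈ ℝ. Then the distance covariances satisfy the Cauchy–Schwarz-type inequality d_g(X,Y) ≤ √(d_g(X,X) · d_g(Y,Y)). Consequently, if d_g(X,X) > 0 and d_g(Y,Y) > 0, the distance correlation R_g(X,Y) = d_g(X,Y)/√(d_g(X,X) d_g(Y,Y)) satisfies 0 ≤ R_g(X,Y) ≤ 1. -/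
open MeasureTheory
open scoped unitInterval ENNReal

/-!
Write `U_ω(s) = exp (i ∑ s_j X_ω(x_j)) - φ_X(x; s)` and define `V_ω(t)` likewise from `Y`, so that
`φ_{X,Y} - φ_X φ_Y = E[U(s) V(t)]`. Let `ν` be the measure with density `∏ g(s_j)` and
`A_U(ω, ω') = ∫ U_ω(s) conj (U_ω'(s)) dν(s)`. If `ν` is finite, Fubini's theorem gives
`∫∫ |E[U(s) V(t)]|² dν dν = ∫∫ A_U(ω, ω') A_V(ω, ω') dℙ dℙ`. By Cauchy–Schwarz the right-hand
side is at most `‖A_U‖ ‖A_V‖` in `L²(ℙ ⊗ ℙ)`, and `‖A_U‖² = ∫∫ |E[U(s) conj (U(t))]|² dν dν` by the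
same identity. For infinite `ν` one exhausts by sets of finite measure. As
`conj (U(t)) = U(-t)`, the evenness of `g` removes the conjugate. Two more applications of
Cauchy–Schwarz handle the integral over `x` and the sum over `k`.
-/

open scoped ComplexConjugate

section CauchySchwarz

variable {α : Type*}

lemma lintegral_le_rpow_half_of_le [MeasurableSpace α] {μ : Measure α} {f g h : α → ℝ≥0∞}
    (hf : AEMeasurable f μ) (hg : AEMeasurable g μ)
    (hle : ∀ a, h a ≤ (f a * g a) ^ (1 / 2 : ℝ)) :
    ∫⁻ a, h a ∂μ ≤ ((∫⁻ a, f a ∂μ) * ∫⁻ a, g a ∂μ) ^ (1 / 2 : ℝ) := by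
  have half_nonneg : (0 : ℝ) ≤ 1 / 2 := by norm_num
  rw [ENNReal.mul_rpow_of_nonneg _ _ half_nonneg]
  calc ∫⁻ a, h a ∂μ
      ≤ ∫⁻ a, f a ^ (1 / 2 : ℝ) * g a ^ (1 / 2 : ℝ) ∂μ :=
        lintegral_mono fun a => (hle a).trans_eq (ENNReal.mul_rpow_of_nonneg _ _ half_nonneg)
    _ ≤ _ := ENNReal.lintegral_mul_norm_pow_le hf hg half_nonneg half_nonneg (add_halves 1)

lemma tsum_le_rpow_half_of_le {f g h : α → ℝ≥0∞}
    (hle : ∀ a, h a ≤ (f a * g a) ^ (1 / 2 : ℝ)) :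
    ∑' a, h a ≤ ((∑' a, f a) * ∑' a, g a) ^ (1 / 2 : ℝ) := by
  let _ : MeasurableSpace α := ⊤
  simpa only [lintegral_count] using lintegral_le_rpow_half_of_le (μ := Measure.count)
    measurable_from_top.aemeasurable measurable_from_top.aemeasurable hle

lemma enorm_integral_mul_conj {𝕜 : Type*} [RCLike 𝕜] [MeasurableSpace α] {μ : Measure α}
    {f : α → 𝕜} (hf : MemLp f 2 μ) :
    ‖∫ a, f a * conj (f a) ∂μ‖ₑ = ∫⁻ a, ‖f a‖ₑ ^ 2 ∂μ := by
  have h_int : Integrable (fun a => ‖f a‖ ^ 2) μ := by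
    simpa using hf.integrable_norm_pow two_ne_zero
  simp_rw [RCLike.mul_conj, ← RCLike.ofReal_pow]
  rw [integral_ofReal, ← ofReal_norm, RCLike.norm_ofReal,
    abs_of_nonneg (integral_nonneg fun a => by positivity),
    ofReal_integral_eq_lintegral_ofReal h_int (ae_of_all _ fun a => by positivity)]
  simp_rw [ENNReal.ofReal_pow (norm_nonneg _), ofReal_norm]

lemma mul_le_rpow_half_of_le {a b c d : ℝ≥0∞} (h : a ≤ (b * d) ^ (1 / 2 : ℝ)) :
    c * a ≤ (c * b * (c * d)) ^ (1 / 2 : ℝ) := by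
  rw [mul_mul_mul_comm, ENNReal.mul_rpow_of_nonneg _ _ one_half_pos.le, ← sq,
    ← ENNReal.rpow_natCast_mul, Nat.cast_ofNat, mul_one_div_cancel two_ne_zero, ENNReal.rpow_one]
  gcongr

end CauchySchwarz

section CrossEnergy

variable {Ω S T 𝕜 : Type*} [RCLike 𝕜]

/-- The Gram kernel `(ω, ω') ↦ ⟨U_ω, U_ω'⟩` of the paths of `U` in `L²(ν)`, conjugate linear in the
second path. -/
noncomputable def gramKernel [MeasurableSpace S] (ν : Measure S) (U : Ω → S → 𝕜) (ω ω' : Ω) : 𝕜 :=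
  ∫ s, U ω s * conj (U ω' s) ∂ν

lemma gramKernel_conj [MeasurableSpace S] (ν : Measure S) (U : Ω → S → 𝕜) (ω ω' : Ω) :
    gramKernel ν (fun ω s => conj (U ω s)) ω ω' = conj (gramKernel ν U ω ω') := by
  simp only [gramKernel, ← integral_conj, map_mul]

variable [MeasurableSpace Ω] {P : Measure Ω} {U : Ω → S → 𝕜} {V : Ω → T → 𝕜} {C D : ℝ}

/-- The mixed moment `E[U(s) V(t)]` of two random fields `U` on `S` and `V` on `T`. The
multiplication is not conjugated. -/
noncomputable def crossMoment (P : Measure Ω) (U : Ω → S → 𝕜) (V : Ω → T → 𝕜) (s : S) (t : T) : 𝕜 :=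
  ∫ ω, U ω s * V ω t ∂P

lemma norm_crossMoment_le [IsFiniteMeasure P] (hUC : ∀ ω s, ‖U ω s‖ ≤ C)
    (hVD : ∀ ω t, ‖V ω t‖ ≤ D) (s : S) (t : T) :
    ‖crossMoment P U V s t‖ ≤ C * D * P.real Set.univ :=
  norm_integral_le_of_norm_le_const (ae_of_all _ fun ω => norm_mul_le_of_le (hUC ω s) (hVD ω t))

variable [MeasurableSpace S] [MeasurableSpace T] {ν : Measure S} {ρ : Measure T}

/-- The squared `L²(ν ⊗ ρ)`-norm of the mixed moments `E[U(s) V(t)]`, as an extended nonnegative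
number. For centered characteristic exponentials it is the inner integral of the distance
covariance. -/
noncomputable def crossEnergy (P : Measure Ω) (ν : Measure S) (ρ : Measure T)
    (U : Ω → S → 𝕜) (V : Ω → T → 𝕜) : ℝ≥0∞ :=
  ∫⁻ s, ∫⁻ t, ‖crossMoment P U V s t‖ₑ ^ 2 ∂ρ ∂ν

lemma measurable_crossMoment [SFinite P] (hU : Measurable fun z : Ω × S => U z.1 z.2)
    (hV : Measurable fun z : Ω × T => V z.1 z.2) :
    Measurable fun p : S × T => crossMoment P U V p.1 p.2 := by
  refine (StronglyMeasurable.integral_prod_right (f := fun (p : S × T) ω => U ω p.1 * V ω p.2)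
    (Measurable.stronglyMeasurable ?_)).measurable
  fun_prop

lemma measurable_gramKernel [SFinite ν] (hU : Measurable fun z : Ω × S => U z.1 z.2) :
    Measurable fun q : Ω × Ω => gramKernel ν U q.1 q.2 :=
  measurable_crossMoment (P := ν) (U := fun s ω => U ω s) (V := fun s ω => conj (U ω s))
    (by fun_prop) (RCLike.continuous_conj.measurable.comp (by fun_prop))

lemma measurable_crossEnergy {α : Type*} [MeasurableSpace α] [SFinite P] [SFinite ν] [SFinite ρ]
    {U : α → Ω → S → 𝕜} {V : α → Ω → T → 𝕜}
    (hU : Measurable fun z : α × Ω × S => U z.1 z.2.1 z.2.2)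
    (hV : Measurable fun z : α × Ω × T => V z.1 z.2.1 z.2.2) :
    Measurable fun a => crossEnergy P ν ρ (U a) (V a) := by
  have hmoment : Measurable fun z : (α × S) × T => crossMoment P (U z.1.1) (V z.1.1) z.1.2 z.2 :=
    (measurable_crossMoment (P := P) (U := fun ω (z : α × S) => U z.1 ω z.2)
      (V := fun ω (z : α × T) => V z.1 ω z.2) (by fun_prop) (by fun_prop)).comp
      (by fun_prop : Measurable fun z : (α × S) × T => (z.1, (z.1.1, z.2)))
  exact (hmoment.enorm.pow_const 2).lintegral_prod_right'.lintegral_prod_right'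

lemma crossEnergy_eq_lintegral_prod [SFinite P] [SFinite ρ]
    (hU : Measurable fun z : Ω × S => U z.1 z.2) (hV : Measurable fun z : Ω × T => V z.1 z.2) :
    crossEnergy P ν ρ U V = ∫⁻ p, ‖crossMoment P U V p.1 p.2‖ₑ ^ 2 ∂ν.prod ρ :=
  (lintegral_prod _ ((measurable_crossMoment hU hV).enorm.pow_const 2).aemeasurable).symm

lemma memLp_crossMoment [IsFiniteMeasure P] [IsFiniteMeasure ν] [IsFiniteMeasure ρ]
    (hU : Measurable fun z : Ω × S => U z.1 z.2) (hV : Measurable fun z : Ω × T => V z.1 z.2)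
    (hUC : ∀ ω s, ‖U ω s‖ ≤ C) (hVD : ∀ ω t, ‖V ω t‖ ≤ D) :
    MemLp (fun p : S × T => crossMoment P U V p.1 p.2) 2 (ν.prod ρ) :=
  MemLp.of_bound (measurable_crossMoment hU hV).aestronglyMeasurable _
    (ae_of_all _ fun p => norm_crossMoment_le hUC hVD p.1 p.2)

lemma memLp_gramKernel [IsFiniteMeasure P] [IsFiniteMeasure ν]
    (hU : Measurable fun z : Ω × S => U z.1 z.2) (hUC : ∀ ω s, ‖U ω s‖ ≤ C) :
    MemLp (fun q : Ω × Ω => gramKernel ν U q.1 q.2) 2 (P.prod P) :=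
  memLp_crossMoment (P := ν) (U := fun s ω => U ω s) (V := fun s ω => conj (U ω s))
    (by fun_prop) (RCLike.continuous_conj.measurable.comp (by fun_prop))
    (fun s ω => hUC ω s) (fun s ω => (RCLike.norm_conj _).trans_le (hUC ω s))

lemma integral_crossMoment_mul_conj [IsFiniteMeasure P] [IsFiniteMeasure ν] [IsFiniteMeasure ρ]
    (hU : Measurable fun z : Ω × S => U z.1 z.2) (hV : Measurable fun z : Ω × T => V z.1 z.2)
    (hUC : ∀ ω s, ‖U ω s‖ ≤ C) (hVD : ∀ ω t, ‖V ω t‖ ≤ D) :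
    ∫ p : S × T, crossMoment P U V p.1 p.2 * conj (crossMoment P U V p.1 p.2) ∂ν.prod ρ =
      ∫ q : Ω × Ω, gramKernel ν U q.1 q.2 * gramKernel ρ V q.1 q.2 ∂P.prod P := by
  have h_int : Integrable (Function.uncurry fun (p : S × T) (q : Ω × Ω) =>
      U q.1 p.1 * V q.1 p.2 * conj (U q.2 p.1 * V q.2 p.2)) ((ν.prod ρ).prod (P.prod P)) := by
    refine Integrable.of_bound (C := C * D * (C * D)) (Measurable.aestronglyMeasurable ?_) ?_
    · exact .mul (by fun_prop) (RCLike.continuous_conj.measurable.comp (by fun_prop))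
    · refine ae_of_all _ fun z => norm_mul_le_of_le
        (norm_mul_le_of_le (hUC _ _) (hVD _ _)) ?_
      rw [RCLike.norm_conj]
      exact norm_mul_le_of_le (hUC _ _) (hVD _ _)
  calc ∫ p : S × T, crossMoment P U V p.1 p.2 * conj (crossMoment P U V p.1 p.2) ∂ν.prod ρ
      = ∫ p : S × T, ∫ q : Ω × Ω,
          U q.1 p.1 * V q.1 p.2 * conj (U q.2 p.1 * V q.2 p.2) ∂P.prod P ∂ν.prod ρ := by
        congr with p
        rw [integral_prod_mul (fun ω => U ω p.1 * V ω p.2) fun ω => conj (U ω p.1 * V ω p.2),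
          integral_conj, crossMoment]
    _ = ∫ q : Ω × Ω, ∫ p : S × T,
          U q.1 p.1 * V q.1 p.2 * conj (U q.2 p.1 * V q.2 p.2) ∂ν.prod ρ ∂P.prod P :=
        integral_integral_swap h_int
    _ = ∫ q : Ω × Ω, gramKernel ν U q.1 q.2 * gramKernel ρ V q.1 q.2 ∂P.prod P := by
        congr with q
        simp_rw [gramKernel, ← integral_prod_mul, map_mul, mul_mul_mul_comm]

lemma crossEnergy_eq_enorm_integral_gramKernel_mul
    [IsFiniteMeasure P] [IsFiniteMeasure ν] [IsFiniteMeasure ρ]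
    (hU : Measurable fun z : Ω × S => U z.1 z.2) (hV : Measurable fun z : Ω × T => V z.1 z.2)
    (hUC : ∀ ω s, ‖U ω s‖ ≤ C) (hVD : ∀ ω t, ‖V ω t‖ ≤ D) :
    crossEnergy P ν ρ U V =
      ‖∫ q : Ω × Ω, gramKernel ν U q.1 q.2 * gramKernel ρ V q.1 q.2 ∂P.prod P‖ₑ := by
  rw [crossEnergy_eq_lintegral_prod hU hV, ← integral_crossMoment_mul_conj hU hV hUC hVD,
    enorm_integral_mul_conj (memLp_crossMoment hU hV hUC hVD)]

lemma lintegral_enorm_gramKernel_sq [IsFiniteMeasure P] [IsFiniteMeasure ν]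
    (hU : Measurable fun z : Ω × S => U z.1 z.2) (hUC : ∀ ω s, ‖U ω s‖ ≤ C) :
    ∫⁻ q : Ω × Ω, ‖gramKernel ν U q.1 q.2‖ₑ ^ 2 ∂P.prod P =
      crossEnergy P ν ν U fun ω s => conj (U ω s) := by
  rw [crossEnergy_eq_enorm_integral_gramKernel_mul hU
    (RCLike.continuous_conj.measurable.comp hU) hUC
    (fun ω s => (RCLike.norm_conj _).trans_le (hUC ω s)),
    ← enorm_integral_mul_conj (memLp_gramKernel hU hUC)]
  simp_rw [gramKernel_conj]

lemma crossEnergy_le_of_isFiniteMeasure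
    [IsFiniteMeasure P] [IsFiniteMeasure ν] [IsFiniteMeasure ρ]
    (hU : Measurable fun z : Ω × S => U z.1 z.2) (hV : Measurable fun z : Ω × T => V z.1 z.2)
    (hUC : ∀ ω s, ‖U ω s‖ ≤ C) (hVD : ∀ ω t, ‖V ω t‖ ≤ D) :
    crossEnergy P ν ρ U V ≤
      (crossEnergy P ν ν U (fun ω s => conj (U ω s)) *
        crossEnergy P ρ ρ V fun ω t => conj (V ω t)) ^ (1 / 2 : ℝ) := by
  rw [crossEnergy_eq_enorm_integral_gramKernel_mul hU hV hUC hVD,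
    ← lintegral_enorm_gramKernel_sq hU hUC, ← lintegral_enorm_gramKernel_sq hV hVD]
  refine (enorm_integral_le_lintegral_enorm _).trans (lintegral_le_rpow_half_of_le
    ((measurable_gramKernel hU).enorm.pow_const 2).aemeasurable
    ((measurable_gramKernel hV).enorm.pow_const 2).aemeasurable fun q => ?_)
  rw [enorm_mul, ← mul_pow, ← ENNReal.rpow_natCast_mul, Nat.cast_ofNat,
    mul_one_div_cancel two_ne_zero, ENNReal.rpow_one]

lemma crossEnergy_mono_measure {ν' : Measure S} {ρ' : Measure T} (hν : ν' ≤ ν) (hρ : ρ' ≤ ρ) :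
    crossEnergy P ν' ρ' U V ≤ crossEnergy P ν ρ U V :=
  lintegral_mono' hν fun _ => lintegral_mono' hρ le_rfl

lemma crossEnergy_eq_iSup_restrict_spanningSets [SFinite P] [SigmaFinite ν] [SigmaFinite ρ]
    (hU : Measurable fun z : Ω × S => U z.1 z.2) (hV : Measurable fun z : Ω × T => V z.1 z.2) :
    crossEnergy P ν ρ U V = ⨆ n, crossEnergy P (ν.restrict (spanningSets ν n))
      (ρ.restrict (spanningSets ρ n)) U V := by
  have hmono : Monotone fun n => spanningSets ν n ×ˢ spanningSets ρ n := fun _ _ hmn =>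
    Set.prod_mono (monotone_spanningSets ν hmn) (monotone_spanningSets ρ hmn)
  have hunion : ⋃ n, spanningSets ν n ×ˢ spanningSets ρ n = Set.univ := by
    rw [Set.iUnion_prod_of_monotone (monotone_spanningSets ν) (monotone_spanningSets ρ),
      iUnion_spanningSets, iUnion_spanningSets, Set.univ_prod_univ]
  simp_rw [crossEnergy_eq_lintegral_prod hU hV, Measure.prod_restrict]
  rw [← setLIntegral_iUnion_of_directed _ hmono.directed_le, hunion, Measure.restrict_univ]

theorem crossEnergy_le [IsFiniteMeasure P] [SigmaFinite ν] [SigmaFinite ρ]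
    (hU : Measurable fun z : Ω × S => U z.1 z.2) (hV : Measurable fun z : Ω × T => V z.1 z.2)
    (hUC : ∀ ω s, ‖U ω s‖ ≤ C) (hVD : ∀ ω t, ‖V ω t‖ ≤ D) :
    crossEnergy P ν ρ U V ≤
      (crossEnergy P ν ν U (fun ω s => conj (U ω s)) *
        crossEnergy P ρ ρ V fun ω t => conj (V ω t)) ^ (1 / 2 : ℝ) := by
  rw [crossEnergy_eq_iSup_restrict_spanningSets hU hV]
  refine iSup_le fun n => ?_
  have := Fact.mk (measure_spanningSets_lt_top ν n)
  have := Fact.mk (measure_spanningSets_lt_top ρ n)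
  refine (crossEnergy_le_of_isFiniteMeasure hU hV hUC hVD).trans ?_
  gcongr <;> exact crossEnergy_mono_measure Measure.restrict_le_self Measure.restrict_le_self

lemma crossEnergy_conj_right [InvolutiveNeg T] [MeasurableNeg T] [ρ.IsNegInvariant]
    (hV : ∀ ω t, V ω (-t) = conj (V ω t)) :
    crossEnergy P ν ρ U (fun ω t => conj (V ω t)) = crossEnergy P ν ρ U V := by
  simp_rw [crossEnergy, crossMoment, ← hV]
  exact lintegral_congr fun s =>
    lintegral_neg_eq_self fun t => ‖∫ ω, U ω s * V ω t ∂P‖ₑ ^ 2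

end CrossEnergy

section CharacteristicExponential

variable {Ω : Type*} {k : ℕ}

/-- The characteristic exponential `exp (i ∑ s_j X(x_j))` of a process `X` along the points `x`;
its expectation is the characteristic function `margCF`. -/
noncomputable def pathExp (X : Ω → C(I, ℝ)) (x : Fin k → I) (ω : Ω) (s : Fin k → ℝ) : ℂ :=
  Complex.exp (Complex.I * ((∑ j, s j * X ω (x j) : ℝ) : ℂ))

lemma norm_pathExp (X : Ω → C(I, ℝ)) (x : Fin k → I) (ω : Ω) (s : Fin k → ℝ) :
    ‖pathExp X x ω s‖ = 1 :=
  Complex.norm_exp_I_mul_ofReal _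

lemma pathExp_neg (X : Ω → C(I, ℝ)) (x : Fin k → I) (ω : Ω) (s : Fin k → ℝ) :
    pathExp X x ω (-s) = conj (pathExp X x ω s) := by
  simp [pathExp, ← Complex.exp_conj]

variable [MeasurableSpace Ω]

lemma margCF_neg (ℙ : Measure Ω) (X : Ω → C(I, ℝ)) (x : Fin k → I) (s : Fin k → ℝ) :
    margCF ℙ X x (-s) = conj (margCF ℙ X x s) := by
  rw [margCF, margCF, ← integral_conj]
  exact integral_congr_ae (ae_of_all _ fun ω => pathExp_neg X x ω s)

variable {ℙ : Measure Ω} {X Y : Ω → C(I, ℝ)}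

lemma norm_margCF_le_one [IsProbabilityMeasure ℙ] (x : Fin k → I) (s : Fin k → ℝ) :
    ‖margCF ℙ X x s‖ ≤ 1 := by
  simpa [margCF, pathExp] using norm_integral_le_of_norm_le_const (μ := ℙ)
    (ae_of_all _ fun ω => (norm_pathExp X x ω s).le)

/-- The characteristic exponential of `X` minus its expectation. Its mixed moments with the one of
`Y` are the differences `φ_{X,Y} - φ_X φ_Y` in the distance covariance. -/
noncomputable def centeredPathExp (ℙ : Measure Ω) (X : Ω → C(I, ℝ)) (x : Fin k → I)
    (ω : Ω) (s : Fin k → ℝ) : ℂ :=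
  pathExp X x ω s - margCF ℙ X x s

lemma norm_centeredPathExp_le_two [IsProbabilityMeasure ℙ] (x : Fin k → I) (ω : Ω)
    (s : Fin k → ℝ) : ‖centeredPathExp ℙ X x ω s‖ ≤ 2 :=
  (norm_sub_le_of_le (norm_pathExp X x ω s).le (norm_margCF_le_one x s)).trans_eq one_add_one_eq_two

lemma centeredPathExp_neg (x : Fin k → I) (ω : Ω) (s : Fin k → ℝ) :
    centeredPathExp ℙ X x ω (-s) = conj (centeredPathExp ℙ X x ω s) := by
  rw [centeredPathExp, centeredPathExp, pathExp_neg, margCF_neg, map_sub]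

lemma integral_sub_integral_mul_sub_integral {𝕜 : Type*} [RCLike 𝕜] [IsProbabilityMeasure ℙ]
    {u v : Ω → 𝕜} (hu : MemLp u 2 ℙ) (hv : MemLp v 2 ℙ) :
    ∫ ω, (u ω - ∫ ω', u ω' ∂ℙ) * (v ω - ∫ ω', v ω' ∂ℙ) ∂ℙ =
      ∫ ω, u ω * v ω ∂ℙ - (∫ ω, u ω ∂ℙ) * ∫ ω, v ω ∂ℙ := by
  have hu' : Integrable u ℙ := hu.integrable one_le_two
  have hv' : Integrable v ℙ := hv.integrable one_le_two
  have huv : Integrable (fun ω => u ω * v ω) ℙ := hu.integrable_mul hv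
  simp_rw [sub_mul, mul_sub]
  rw [integral_sub (by fun_prop) (by fun_prop), integral_sub huv (by fun_prop),
    integral_sub (by fun_prop) (by fun_prop), integral_mul_const, integral_const_mul,
    integral_const, probReal_univ, one_smul, sub_self, sub_zero]

variable [MeasurableSpace C(I, ℝ)] [BorelSpace C(I, ℝ)]

lemma measurable_pathExp (hX : Measurable X) :
    Measurable fun z : (Fin k → I) × Ω × (Fin k → ℝ) => pathExp X z.1 z.2.1 z.2.2 := by
  have heval : Measurable fun z : Ω × I => X z.1 z.2 :=
    (continuous_eval (F := C(I, ℝ))).measurable.comp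
      (by fun_prop : Measurable fun z : Ω × I => (X z.1, z.2))
  unfold pathExp
  fun_prop

lemma memLp_pathExp [IsFiniteMeasure ℙ] (hX : Measurable X) (x : Fin k → I) (s : Fin k → ℝ) :
    MemLp (fun ω => pathExp X x ω s) 2 ℙ :=
  MemLp.of_bound ((measurable_pathExp hX).comp
    (by fun_prop : Measurable fun ω : Ω => (x, ω, s))).aestronglyMeasurable 1
    (ae_of_all _ fun ω => (norm_pathExp X x ω s).le)

lemma measurable_margCF [SFinite ℙ] (hX : Measurable X) :
    Measurable fun z : (Fin k → I) × (Fin k → ℝ) => margCF ℙ X z.1 z.2 := by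
  have hpath := measurable_pathExp (k := k) hX
  have hexp : Measurable fun q : ((Fin k → I) × (Fin k → ℝ)) × Ω => pathExp X q.1.1 q.2 q.1.2 := by
    fun_prop
  exact hexp.stronglyMeasurable.integral_prod_right'.measurable

lemma measurable_centeredPathExp [SFinite ℙ] (hX : Measurable X) :
    Measurable fun z : (Fin k → I) × Ω × (Fin k → ℝ) => centeredPathExp ℙ X z.1 z.2.1 z.2.2 := by
  have hexp := measurable_pathExp (k := k) hX
  have hmarg := measurable_margCF (k := k) (ℙ := ℙ) hX
  unfold centeredPathExp
  fun_prop

lemma crossMoment_centeredPathExp [IsProbabilityMeasure ℙ] (hX : Measurable X) (hY : Measurable Y)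
    (x : Fin k → I) (s t : Fin k → ℝ) :
    crossMoment ℙ (centeredPathExp ℙ X x) (centeredPathExp ℙ Y x) s t =
      jointCF ℙ X Y x s t - margCF ℙ X x s * margCF ℙ Y x t := by
  have hjoint : jointCF ℙ X Y x s t = ∫ ω, pathExp X x ω s * pathExp Y x ω t ∂ℙ := by
    simp only [jointCF, pathExp, ← Complex.exp_add, ← mul_add, ← Complex.ofReal_add,
      Finset.sum_add_distrib]
  rw [hjoint]
  exact integral_sub_integral_mul_sub_integral (memLp_pathExp hX x s) (memLp_pathExp hY x t)

end CharacteristicExponential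

section Weight

lemma isNegInvariant_withDensity {G : Type*} [MeasurableSpace G] [InvolutiveNeg G]
    [MeasurableNeg G] {μ : Measure G} [μ.IsNegInvariant] {w : G → ℝ≥0∞} (hw : Measurable w)
    (hw_neg : ∀ s, w (-s) = w s) : (μ.withDensity w).IsNegInvariant where
  neg_eq_self := by
    ext A hA
    rw [Measure.neg_apply, withDensity_apply _ hA.neg, withDensity_apply _ hA,
      ← (Measure.measurePreserving_neg μ).setLIntegral_comp_preimage hA hw, Set.neg_preimage]
    simp_rw [hw_neg]

/-- The measure with density `∏ g(t_j)` on `ℝ^k`. A negative product of values of `g` counts as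
`0`. -/
noncomputable def weightMeasure (g : ℝ → ℝ) (k : ℕ) : Measure (Fin k → ℝ) :=
  volume.withDensity fun t => ENNReal.ofReal (∏ j, g (t j))

variable {g : ℝ → ℝ} {k : ℕ}

instance sigmaFinite_weightMeasure : SigmaFinite (weightMeasure g k) :=
  SigmaFinite.withDensity_ofReal _

lemma isNegInvariant_weightMeasure (hg : Measurable g) (hg_symm : ∀ s, g (-s) = g s) :
    (weightMeasure g k).IsNegInvariant :=
  isNegInvariant_withDensity (by fun_prop) fun t => by simp [hg_symm]

lemma lintegral_weightMeasure (hg : Measurable g) (f : (Fin k → ℝ) → ℝ≥0∞) :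
    ∫⁻ t, f t ∂weightMeasure g k = ∫⁻ t, ENNReal.ofReal (∏ j, g (t j)) * f t :=
  lintegral_withDensity_eq_lintegral_mul_non_measurable _ (by fun_prop)
    (ae_of_all _ fun _ => ENNReal.ofReal_lt_top) f

end Weight

section DistCov

variable {Ω : Type*} [MeasurableSpace Ω] {ℙ : Measure Ω} [IsProbabilityMeasure ℙ]
  [MeasurableSpace C(I, ℝ)] [BorelSpace C(I, ℝ)] {X Y : Ω → C(I, ℝ)} {g : ℝ → ℝ} {k : ℕ}

lemma lintegral_joint_sub_marg_eq_crossEnergy (hX : Measurable X) (hY : Measurable Y)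
    (hg : Measurable g) (hg_nonneg : ∀ s, 0 ≤ g s) (x : Fin k → I) :
    ∫⁻ (s : Fin k → ℝ), ∫⁻ (t : Fin k → ℝ), ENNReal.ofReal
        (‖jointCF ℙ X Y x s t - margCF ℙ X x s * margCF ℙ Y x t‖ ^ 2 * ∏ j, g (s j) * g (t j)) =
      crossEnergy ℙ (weightMeasure g k) (weightMeasure g k)
        (centeredPathExp ℙ X x) (centeredPathExp ℙ Y x) := by
  have hprod (s : Fin k → ℝ) : 0 ≤ ∏ j, g (s j) := Finset.prod_nonneg fun j _ => hg_nonneg (s j)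
  simp_rw [crossEnergy, lintegral_weightMeasure hg, crossMoment_centeredPathExp hX hY]
  refine lintegral_congr fun s => ?_
  rw [← lintegral_const_mul' _ _ ENNReal.ofReal_ne_top]
  refine lintegral_congr fun t => ?_
  rw [Finset.prod_mul_distrib, mul_comm, mul_assoc, ENNReal.ofReal_mul (hprod s),
    ENNReal.ofReal_mul (hprod t), ENNReal.ofReal_pow (norm_nonneg _), ofReal_norm]

lemma distCov_eq_tsum_crossEnergy (hX : Measurable X) (hY : Measurable Y)
    (hg : Measurable g) (hg_nonneg : ∀ s, 0 ≤ g s) :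
    distCov ℙ X Y g = ∑' k : ℕ, ENNReal.ofReal (Real.exp (-1) / (Nat.factorial (k + 1) : ℝ)) *
      ∫⁻ x : Fin (k + 1) → I, crossEnergy ℙ (weightMeasure g (k + 1)) (weightMeasure g (k + 1))
        (centeredPathExp ℙ X x) (centeredPathExp ℙ Y x) := by
  simp_rw [distCov, lintegral_joint_sub_marg_eq_crossEnergy hX hY hg hg_nonneg]

lemma crossEnergy_centeredPathExp_le (hX : Measurable X) (hY : Measurable Y)
    (hg : Measurable g) (hg_symm : ∀ s, g (-s) = g s) (x : Fin k → I) :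
    crossEnergy ℙ (weightMeasure g k) (weightMeasure g k)
        (centeredPathExp ℙ X x) (centeredPathExp ℙ Y x) ≤
      (crossEnergy ℙ (weightMeasure g k) (weightMeasure g k)
          (centeredPathExp ℙ X x) (centeredPathExp ℙ X x) *
        crossEnergy ℙ (weightMeasure g k) (weightMeasure g k)
          (centeredPathExp ℙ Y x) (centeredPathExp ℙ Y x)) ^ (1 / 2 : ℝ) := by
  have := isNegInvariant_weightMeasure (k := k) hg hg_symm
  have hmeas {Z : Ω → C(I, ℝ)} (hZ : Measurable Z) :
      Measurable fun z : Ω × (Fin k → ℝ) => centeredPathExp ℙ Z x z.1 z.2 := by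
    have hcentered := measurable_centeredPathExp (k := k) (ℙ := ℙ) hZ
    fun_prop
  simpa only [crossEnergy_conj_right (centeredPathExp_neg x)] using
    crossEnergy_le (ν := weightMeasure g k) (ρ := weightMeasure g k) (hmeas hX) (hmeas hY)
      (norm_centeredPathExp_le_two x) (norm_centeredPathExp_le_two x)

end DistCov

theorem distCov_cauchySchwarz_general
    {Ω : Type*} [MeasurableSpace Ω] (ℙ : Measure Ω) [IsProbabilityMeasure ℙ]
    [MeasurableSpace C(I, ℝ)] [BorelSpace C(I, ℝ)]
    (X Y : Ω → C(I, ℝ)) (hX : Measurable X) (hY : Measurable Y)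
    (g : ℝ → ℝ) (hg : Measurable g) (hg_nonneg : ∀ s, 0 ≤ g s) (hg_symm : ∀ s, g (-s) = g s) :
    distCov ℙ X Y g ≤ (distCov ℙ X X g * distCov ℙ Y Y g) ^ (1 / 2 : ℝ) := by
  rw [distCov_eq_tsum_crossEnergy hX hY hg hg_nonneg,
    distCov_eq_tsum_crossEnergy hX hX hg hg_nonneg, distCov_eq_tsum_crossEnergy hY hY hg hg_nonneg]
  have hmeas {Z : Ω → C(I, ℝ)} (hZ : Measurable Z) (k : ℕ) :=
    measurable_crossEnergy (P := ℙ) (ν := weightMeasure g k) (ρ := weightMeasure g k)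
      (measurable_centeredPathExp (ℙ := ℙ) hZ) (measurable_centeredPathExp (ℙ := ℙ) hZ)
  exact tsum_le_rpow_half_of_le fun k => mul_le_rpow_half_of_le <|
    lintegral_le_rpow_half_of_le (hmeas hX (k + 1)).aemeasurable (hmeas hY (k + 1)).aemeasurable
      fun x => crossEnergy_centeredPathExp_le hX hY hg hg_symm x

/-- For a symmetric probability density `g` on `ℝ`, the distance
covariance satisfies the Cauchy–Schwarz-type inequality
`d_g(X,Y) ≤ √(d_g(X,X) d_g(Y,Y))`; consequently the distance correlation
`R_g(X,Y) = d_g(X,Y)/√(d_g(X,X) d_g(Y,Y))` lies in `[0,1]` whenever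
`d_g(X,X) > 0` and `d_g(Y,Y) > 0`. (Nonnegativity is automatic in `ℝ≥0∞`.) -/
theorem distCov_cauchySchwarz
    {Ω : Type*} [MeasurableSpace Ω] (ℙ : Measure Ω) [IsProbabilityMeasure ℙ]
    [MeasurableSpace C(I, ℝ)] [BorelSpace C(I, ℝ)]
    (X Y : Ω → C(I, ℝ)) (hX : Measurable X) (hY : Measurable Y)
    (g : ℝ → ℝ) (hg : Measurable g) (hg_nonneg : ∀ s, 0 ≤ g s)
    (hg_int : (∫ s, g s) = 1) (hg_symm : ∀ s, g (-s) = g s) :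
    distCov ℙ X Y g ≤ (distCov ℙ X X g * distCov ℙ Y Y g) ^ (1/2 : ℝ) ∧
      (0 < distCov ℙ X X g → 0 < distCov ℙ Y Y g →
        distCov ℙ X Y g / (distCov ℙ X X g * distCov ℙ Y Y g) ^ (1/2 : ℝ) ≤ 1) := by
  have h := distCov_cauchySchwarz_general ℙ X Y hX hY g hg hg_nonneg hg_symm
  exact ⟨h, fun _ _ => ENNReal.div_le_of_le_mul (by rwa [one_mul])⟩
end

section
/- Let α ∈ (0,2] and let g : ℝ → [0,∞) be a probability density such that ∫_ℝ e^{isu} g(s) ds = e^{−|u|^α} for all u ∈ ℝ (the density of a suitably scaled symmetric α-stable law). Let (X',Y') be an independent copy of (X,Y), and let Y'', Y''' be independent copies of Y such that (X,Y), (X',Y'), Y'', Y''' are mutually independent. Then d_g(X,Y) = e^{−1} ( E[exp(∫_0^1 e^{−|X(x)−X'(x)|^α − |Y(x)−Y'(x)|^α} dx)] + E[exp(∫_0^1 e^{−|X(x)−X'(x)|^α − |Y''(x)−Y'''(x)|^α} dx)] − 2 E[exp(∫_0^1 e^{−|X(x)−X'(x)|^α − |Y(x)−Y''(x)|^α} dx)]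 ). -/
open MeasureTheory
open scoped unitInterval ENNReal

/-!
Expand `|E[e^{i(A+B)}] - E[e^{iA}] E[e^{iB}]|²` as an expectation over independent copies, where
`A` and `B` are the linear combinations of the values of `X` and of `Y` in the `k`-th term of
`d_g(X,Y)`. The integrand is then a product over `j` of factors that depend on the single point
`(x_j, s_j, t_j)`, so Fubini turns the `k`-th term into an expectation of the `k`-th power of
`∫₀¹ ĝ(X(x) - X'(x)) ĝ(Y(x) - Y'(x)) dx`, with other copies in the other two expectations, where
`ĝ(u) = ∫ e^{isu} g(s) ds`. Dividing by `k!` and summing gives the exponential of this integral.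
The exponential series has a term `k = 0` that `d_g(X,Y)` lacks, but it contributes
`1 + 1 - 2 = 0`. For a stable density `ĝ(u) = e^{-|u|^α}`.
-/

open Function

/-- The point `e^{ir}` of the unit circle, in the form in which it occurs in `jointCF` and
`margCF`. -/
noncomputable def expI (r : ℝ) : ℂ := Complex.exp (Complex.I * r)

lemma norm_expI (r : ℝ) : ‖expI r‖ = 1 := by
  rw [expI, mul_comm, Complex.norm_exp_ofReal_mul_I]

lemma expI_add (r s : ℝ) : expI (r + s) = expI r * expI s := by
  simp [expI, mul_add, Complex.exp_add]

lemma expI_sum {ι : Type*} (t : Finset ι) (r : ι → ℝ) :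
    expI (∑ j ∈ t, r j) = ∏ j ∈ t, expI (r j) := by
  simp [expI, Finset.mul_sum, Complex.exp_sum]

lemma conj_expI (r : ℝ) : starRingEnd ℂ (expI r) = expI (-r) := by
  simp [expI, ← Complex.exp_conj]

lemma measurable_expI : Measurable expI := by
  unfold expI
  fun_prop

section Integration

variable {Θ P S : Type*} [MeasurableSpace Θ] [MeasurableSpace P] [MeasurableSpace S]

lemma hasSum_integral_pow_div_factorial {ρ : Measure Θ} [IsFiniteMeasure ρ] {K : Θ → ℂ} {C : ℝ}
    (hK : AEStronglyMeasurable K ρ) (hKC : ∀ᵐ θ ∂ρ, ‖K θ‖ ≤ C) :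
    HasSum (fun k : ℕ ↦ ∫ θ, K θ ^ k / (k.factorial : ℂ) ∂ρ) (∫ θ, Complex.exp (K θ) ∂ρ) := by
  refine hasSum_integral_of_dominated_convergence (fun k _ ↦ C ^ k / k.factorial)
    (fun k ↦ by fun_prop) (fun k ↦ hKC.mono fun θ hθ ↦ ?_)
    (.of_forall fun _ ↦ Real.summable_pow_div_factorial C) (integrable_const _)
    (.of_forall fun θ ↦ ?_)
  · rw [norm_div, norm_pow, Complex.norm_natCast]
    gcongr
  · rw [Complex.exp_eq_exp_ℂ]
    exact NormedSpace.expSeries_div_hasSum_exp (K θ)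

lemma measurable_uncurry_comp {Θ' E : Type*} [MeasurableSpace Θ'] [MeasurableSpace E]
    {Φ : P → Θ' → E} {c : Θ → Θ'} (hΦ : Measurable (uncurry Φ)) (hc : Measurable c) :
    Measurable (uncurry fun p θ ↦ Φ p (c θ)) :=
  hΦ.comp (measurable_fst.prodMk (hc.comp measurable_snd))

section Domination

variable {Θ' : Type*} [MeasurableSpace Θ'] {E : Type*} [NormedAddCommGroup E]
  [MeasurableSpace E] [BorelSpace E] [SecondCountableTopology E] {μ : Measure P} {ρ : Measure Θ}
  {Φ : P → Θ' → E} {W : P → ℝ} {c : Θ → Θ'}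

lemma integrable_uncurry_comp [IsFiniteMeasure ρ] (hΦ : Measurable (uncurry Φ))
    (hW : Integrable W μ) (hΦW : ∀ p θ, ‖Φ p θ‖ ≤ W p) (hc : Measurable c) :
    Integrable (uncurry fun p θ ↦ Φ p (c θ)) (μ.prod ρ) :=
  (hW.comp_fst ρ).mono' (measurable_uncurry_comp hΦ hc).aestronglyMeasurable
    (.of_forall fun z ↦ hΦW z.1 (c z.2))

variable [NormedSpace ℝ E]

lemma measurable_integral_comp [SFinite ρ] (hΦ : Measurable (uncurry Φ)) (hc : Measurable c) :
    Measurable fun p ↦ ∫ θ, Φ p (c θ) ∂ρ :=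
  (measurable_uncurry_comp hΦ hc).stronglyMeasurable.integral_prod_right'.measurable

variable [IsFiniteMeasure ρ]

lemma integrable_integral_comp (hΦ : Measurable (uncurry Φ)) (hW : Integrable W μ)
    (hΦW : ∀ p θ, ‖Φ p θ‖ ≤ W p) (hc : Measurable c) :
    Integrable (fun p ↦ ∫ θ, Φ p (c θ) ∂ρ) μ :=
  (integrable_uncurry_comp hΦ hW hΦW hc).integral_prod_left

lemma integral_integral_comp_swap [SFinite μ] (hΦ : Measurable (uncurry Φ)) (hW : Integrable W μ)
    (hΦW : ∀ p θ, ‖Φ p θ‖ ≤ W p) (hc : Measurable c) :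
    ∫ p, ∫ θ, Φ p (c θ) ∂ρ ∂μ = ∫ θ, ∫ p, Φ p (c θ) ∂μ ∂ρ :=
  integral_integral_swap (integrable_uncurry_comp hΦ hW hΦW hc)

end Domination

lemma lintegral_pi_prod {ι : Type*} [Fintype ι] {μ : Measure P} {ν : Measure S} [SigmaFinite μ]
    [SigmaFinite ν] {F : (ι → P × S) → ℝ≥0∞} (hF : Measurable F) :
    ∫⁻ p, F p ∂(Measure.pi fun _ ↦ μ.prod ν) =
      ∫⁻ x, ∫⁻ y, F (fun j ↦ (x j, y j)) ∂(Measure.pi fun _ ↦ ν) ∂(Measure.pi fun _ ↦ μ) := by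
  have e := (measurePreserving_arrowProdEquivProdArrow P S ι (fun _ ↦ μ) (fun _ ↦ ν)).symm
  exact (e.lintegral_comp hF).symm.trans (lintegral_prod _ (hF.comp e.measurable).aemeasurable)

lemma lintegral_pi_prod_prod {ι : Type*} [Fintype ι] {μ : Measure P} {ν : Measure S}
    {ρ : Measure Θ} [SigmaFinite μ] [SigmaFinite ν] [SigmaFinite ρ] {F : (ι → P × S × Θ) → ℝ≥0∞}
    (hF : Measurable F) :
    ∫⁻ p, F p ∂(Measure.pi fun _ ↦ μ.prod (ν.prod ρ)) =
      ∫⁻ x, ∫⁻ y, ∫⁻ z, F (fun j ↦ (x j, y j, z j)) ∂(Measure.pi fun _ ↦ ρ)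
        ∂(Measure.pi fun _ ↦ ν) ∂(Measure.pi fun _ ↦ μ) := by
  have hslice (x : ι → P) : Measurable fun q : ι → S × Θ ↦ F fun j ↦ (x j, q j) :=
    hF.comp (by fun_prop)
  simp only [lintegral_pi_prod hF, lintegral_pi_prod (hslice _)]

end Integration

/-- For independent `ω₁, ω₂, ω₃, ω₄` with law `ℙ`, the combination
`E[Φ((ω₁, ω₂), (ω₁, ω₂))] + E[Φ((ω₁, ω₂), (ω₃, ω₄))] - 2 E[Φ((ω₁, ω₂), (ω₁, ω₃))]` that appears
when the square of a covariance is expanded. The first pair of sample points is meant for a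
difference of copies of `X`, the second one for a difference of copies of `Y`. -/
noncomputable def copiesExpectation {Ω : Type*} [MeasurableSpace Ω] (ℙ : Measure Ω) {𝕜 : Type*}
    [RCLike 𝕜] (Φ : (Ω × Ω) × Ω × Ω → 𝕜) : 𝕜 :=
  ∫ ω, Φ (ω, ω) ∂(ℙ.prod ℙ) + ∫ ω, Φ ω ∂((ℙ.prod ℙ).prod (ℙ.prod ℙ))
    - 2 * ∫ ω, Φ ((ω.1, ω.2.1), (ω.1, ω.2.2)) ∂(ℙ.prod (ℙ.prod ℙ))

/-- The covariance `E[e^{i(A + B)}] - E[e^{iA}] E[e^{iB}]` of `e^{iA}` and `e^{iB}`. -/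
noncomputable def expICov {Ω : Type*} [MeasurableSpace Ω] (ℙ : Measure Ω) (A B : Ω → ℝ) : ℂ :=
  ∫ ω, expI (A ω + B ω) ∂ℙ - (∫ ω, expI (A ω) ∂ℙ) * ∫ ω, expI (B ω) ∂ℙ

lemma norm_sub_mul_sq (z u v : ℂ) :
    ‖z - u * v‖ ^ 2 = (z * starRingEnd ℂ z + (u * starRingEnd ℂ u) * (v * starRingEnd ℂ v) -
      2 * (z * (starRingEnd ℂ u * starRingEnd ℂ v))).re := by
  rw [Complex.sq_norm, Complex.normSq_apply]
  simp only [Complex.sub_re, Complex.sub_im, Complex.add_re, Complex.mul_re, Complex.mul_im,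
    Complex.conj_re, Complex.conj_im, Complex.re_ofNat, Complex.im_ofNat]
  ring

section Copies

variable {Ω : Type*} [MeasurableSpace Ω] {ℙ : Measure Ω}

lemma copiesExpectation_mul_const {𝕜 : Type*} [RCLike 𝕜] (Φ : (Ω × Ω) × Ω × Ω → 𝕜) (c : 𝕜) :
    copiesExpectation ℙ (fun ω ↦ Φ ω * c) = copiesExpectation ℙ Φ * c := by
  simp only [copiesExpectation, integral_mul_const]
  ring

lemma copiesExpectation_ofReal (Φ : (Ω × Ω) × Ω × Ω → ℝ) :
    copiesExpectation ℙ (fun ω ↦ (Φ ω : ℂ)) = copiesExpectation ℙ Φ := by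
  simp only [copiesExpectation, integral_complex_ofReal]
  push_cast
  rfl

lemma norm_expICov_sq [SFinite ℙ] (A B : Ω → ℝ) :
    ‖expICov ℙ A B‖ ^ 2 = (copiesExpectation ℙ fun ω ↦
      expI (A ω.1.1 - A ω.1.2 + (B ω.2.1 - B ω.2.2))).re := by
  rw [expICov, norm_sub_mul_sq]
  simp only [copiesExpectation, ← integral_conj, ← integral_prod_mul, conj_expI, ← expI_add]
  simp only [neg_add, add_add_add_comm, sub_eq_add_neg]

variable {P : Type*} [MeasurableSpace P] {𝕜 : Type*} [RCLike 𝕜] {Φ : P → (Ω × Ω) × Ω × Ω → 𝕜}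

lemma measurable_copiesExpectation [SFinite ℙ] (hΦ : Measurable (uncurry Φ)) :
    Measurable fun p ↦ copiesExpectation ℙ (Φ p) :=
  have h_diag : Measurable fun p ↦ ∫ ω, Φ p (ω, ω) ∂(ℙ.prod ℙ) :=
    measurable_integral_comp hΦ (by fun_prop)
  have h_indep : Measurable fun p ↦ ∫ ω, Φ p ω ∂((ℙ.prod ℙ).prod (ℙ.prod ℙ)) :=
    measurable_integral_comp hΦ measurable_id
  have h_shared :
      Measurable fun p ↦ ∫ ω, Φ p ((ω.1, ω.2.1), (ω.1, ω.2.2)) ∂(ℙ.prod (ℙ.prod ℙ)) :=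
    measurable_integral_comp hΦ (by fun_prop)
  (h_diag.add h_indep).sub (h_shared.const_mul 2)

variable [IsFiniteMeasure ℙ] {μ : Measure P} {W : P → ℝ}

lemma integrable_copiesExpectation (hΦ : Measurable (uncurry Φ)) (hW : Integrable W μ)
    (hΦW : ∀ p ω, ‖Φ p ω‖ ≤ W p) : Integrable (fun p ↦ copiesExpectation ℙ (Φ p)) μ :=
  ((integrable_integral_comp hΦ hW hΦW (by fun_prop)).add
    (integrable_integral_comp hΦ hW hΦW measurable_id)).sub
    ((integrable_integral_comp hΦ hW hΦW (by fun_prop)).const_mul 2)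

lemma integral_copiesExpectation [SFinite μ] (hΦ : Measurable (uncurry Φ)) (hW : Integrable W μ)
    (hΦW : ∀ p ω, ‖Φ p ω‖ ≤ W p) :
    ∫ p, copiesExpectation ℙ (Φ p) ∂μ = copiesExpectation ℙ fun ω ↦ ∫ p, Φ p ω ∂μ := by
  have h_diag : Integrable (fun p ↦ ∫ ω, Φ p (ω, ω) ∂(ℙ.prod ℙ)) μ :=
    integrable_integral_comp hΦ hW hΦW (by fun_prop)
  have h_indep : Integrable (fun p ↦ ∫ ω, Φ p ω ∂((ℙ.prod ℙ).prod (ℙ.prod ℙ))) μ :=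
    integrable_integral_comp hΦ hW hΦW measurable_id
  have h_shared :
      Integrable (fun p ↦ ∫ ω, Φ p ((ω.1, ω.2.1), (ω.1, ω.2.2)) ∂(ℙ.prod (ℙ.prod ℙ))) μ :=
    integrable_integral_comp hΦ hW hΦW (by fun_prop)
  unfold copiesExpectation
  rw [integral_sub (h_diag.fun_add h_indep) (h_shared.const_mul 2),
    integral_add h_diag h_indep, integral_const_mul,
    integral_integral_comp_swap hΦ hW hΦW (by fun_prop),
    integral_integral_comp_swap (c := fun ω ↦ ω) hΦ hW hΦW measurable_id,
    integral_integral_comp_swap hΦ hW hΦW (by fun_prop)]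

lemma hasSum_copiesExpectation_pow_div_factorial {K : (Ω × Ω) × Ω × Ω → ℂ} {C : ℝ}
    (hK : Measurable K) (hKC : ∀ ω, ‖K ω‖ ≤ C) :
    HasSum (fun k : ℕ ↦ copiesExpectation ℙ fun ω ↦ K ω ^ k / (k.factorial : ℂ))
      (copiesExpectation ℙ fun ω ↦ Complex.exp (K ω)) :=
  have h_diag := hasSum_integral_pow_div_factorial (ρ := ℙ.prod ℙ) (K := fun ω ↦ K (ω, ω))
    (hK.comp (by fun_prop)).aestronglyMeasurable (.of_forall fun _ ↦ hKC _)
  have h_indep := hasSum_integral_pow_div_factorial (ρ := (ℙ.prod ℙ).prod (ℙ.prod ℙ))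
    hK.aestronglyMeasurable (.of_forall hKC)
  have h_shared := hasSum_integral_pow_div_factorial (ρ := ℙ.prod (ℙ.prod ℙ))
    (K := fun ω ↦ K ((ω.1, ω.2.1), (ω.1, ω.2.2)))
    (hK.comp (by fun_prop)).aestronglyMeasurable (.of_forall fun _ ↦ hKC _)
  (h_diag.add h_indep).sub (h_shared.mul_left 2)

end Copies

section Fields

variable {Ω S : Type*} {a b : S → Ω → ℝ} {w : S → ℝ} {ι : Type*} [Fintype ι]

/-- The squared modulus `|φ_{A,B} - φ_A φ_B|²` of the finite-dimensional distributions of two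
random fields `a` and `b` at `p`, weighted by `∏ w (p j)`. The frequencies are part of the fields:
for processes `X` and `Y` a point of `S` is a triple `(x, s, t)`, and `a (x, s, t) = s * X x`,
`b (x, s, t) = t * Y x`. -/
noncomputable def weightedGap [MeasurableSpace Ω] (ℙ : Measure Ω) (a b : S → Ω → ℝ) (w : S → ℝ)
    (p : ι → S) : ℝ :=
  ‖expICov ℙ (fun ω ↦ ∑ j, a (p j) ω) (fun ω ↦ ∑ j, b (p j) ω)‖ ^ 2 * ∏ j, w (p j)

/-- The contribution of one point `q` of `S` to `weightedGap`, once the square is expanded as an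
expectation over independent copies (see `weightedGap_eq_re_copiesExpectation`). -/
noncomputable def copiesKernel (a b : S → Ω → ℝ) (w : S → ℝ) (q : S) (ω : (Ω × Ω) × Ω × Ω) : ℂ :=
  expI (a q ω.1.1 - a q ω.1.2 + (b q ω.2.1 - b q ω.2.2)) * w q

lemma norm_copiesKernel (q : S) (ω : (Ω × Ω) × Ω × Ω) : ‖copiesKernel a b w q ω‖ = |w q| := by
  simp [copiesKernel, norm_expI]

variable [MeasurableSpace Ω] {ℙ : Measure Ω}

lemma weightedGap_eq_re_copiesExpectation [SFinite ℙ] (p : ι → S) :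
    weightedGap ℙ a b w p = (copiesExpectation ℙ fun ω ↦ ∏ j, copiesKernel a b w (p j) ω).re := by
  rw [weightedGap, norm_expICov_sq, ← Complex.re_mul_ofReal, ← copiesExpectation_mul_const]
  push_cast
  simp only [copiesKernel, Finset.prod_mul_distrib, ← expI_sum, Finset.sum_add_distrib,
    Finset.sum_sub_distrib]

lemma weightedGap_nonneg (hw : ∀ q, 0 ≤ w q) (p : ι → S) : 0 ≤ weightedGap ℙ a b w p :=
  mul_nonneg (sq_nonneg _) (Finset.prod_nonneg fun _ _ ↦ hw _)

lemma weightedGap_of_isEmpty [IsEmpty ι] [IsProbabilityMeasure ℙ] (p : ι → S) :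
    weightedGap ℙ a b w p = 0 := by
  simp [weightedGap, expICov, expI]

variable [MeasurableSpace S]

lemma measurable_uncurry_copiesKernel (ha : Measurable (uncurry a)) (hb : Measurable (uncurry b))
    (hw : Measurable w) : Measurable (uncurry (copiesKernel a b w)) := by
  have hA : Measurable (uncurry fun q (ω : (Ω × Ω) × Ω × Ω) ↦ a q ω.1.1 - a q ω.1.2) :=
    (measurable_uncurry_comp (c := fun ω : (Ω × Ω) × Ω × Ω ↦ ω.1.1) ha (by fun_prop)).sub
      (measurable_uncurry_comp (c := fun ω : (Ω × Ω) × Ω × Ω ↦ ω.1.2) ha (by fun_prop))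
  have hB : Measurable (uncurry fun q (ω : (Ω × Ω) × Ω × Ω) ↦ b q ω.2.1 - b q ω.2.2) :=
    (measurable_uncurry_comp (c := fun ω : (Ω × Ω) × Ω × Ω ↦ ω.2.1) hb (by fun_prop)).sub
      (measurable_uncurry_comp (c := fun ω : (Ω × Ω) × Ω × Ω ↦ ω.2.2) hb (by fun_prop))
  exact (measurable_expI.comp (hA.add hB)).mul (by fun_prop)

lemma measurable_uncurry_prod_copiesKernel (ha : Measurable (uncurry a))
    (hb : Measurable (uncurry b)) (hw : Measurable w) :
    Measurable (uncurry fun (p : ι → S) ω ↦ ∏ j, copiesKernel a b w (p j) ω) := by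
  have heval (j : ι) : Measurable fun z : (ι → S) × (Ω × Ω) × Ω × Ω ↦ (z.1 j, z.2) := by fun_prop
  have h (j : ι) := (measurable_uncurry_copiesKernel ha hb hw).comp (heval j)
  simp only [uncurry_def, comp_def] at h ⊢
  exact Finset.measurable_fun_prod _ fun j _ ↦ h j

lemma measurable_weightedGap [SFinite ℙ] (ha : Measurable (uncurry a)) (hb : Measurable (uncurry b))
    (hw : Measurable w) : Measurable (weightedGap ℙ a b w (ι := ι)) := by
  have h := measurable_copiesExpectation (ℙ := ℙ)
    (measurable_uncurry_prod_copiesKernel (ι := ι) ha hb hw)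
  simp only [funext weightedGap_eq_re_copiesExpectation]
  exact Complex.measurable_re.comp h

variable [IsFiniteMeasure ℙ] {ν : Measure S} [SigmaFinite ν]

lemma integrable_copiesExpectation_prod_copiesKernel (ha : Measurable (uncurry a))
    (hb : Measurable (uncurry b)) (hw : Measurable w) (hwi : Integrable w ν) :
    Integrable (fun p : ι → S ↦ copiesExpectation ℙ fun ω ↦ ∏ j, copiesKernel a b w (p j) ω)
      (Measure.pi fun _ ↦ ν) :=
  integrable_copiesExpectation (measurable_uncurry_prod_copiesKernel ha hb hw)
    (Integrable.fintype_prod (f := fun _ q ↦ |w q|) fun _ ↦ hwi.abs)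
    fun p ω ↦ by simp [norm_copiesKernel]

lemma integrable_weightedGap (ha : Measurable (uncurry a)) (hb : Measurable (uncurry b))
    (hw : Measurable w) (hwi : Integrable w ν) :
    Integrable (weightedGap ℙ a b w (ι := ι)) (Measure.pi fun _ ↦ ν) :=
  (integrable_copiesExpectation_prod_copiesKernel ha hb hw hwi).re.congr
    (.of_forall fun p ↦ (weightedGap_eq_re_copiesExpectation p).symm)

lemma integral_weightedGap (ha : Measurable (uncurry a)) (hb : Measurable (uncurry b))
    (hw : Measurable w) (hwi : Integrable w ν) :
    ∫ p : ι → S, weightedGap ℙ a b w p ∂(Measure.pi fun _ ↦ ν) =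
      (copiesExpectation ℙ fun ω ↦ (∫ q, copiesKernel a b w q ω ∂ν) ^ Fintype.card ι).re := by
  simp only [weightedGap_eq_re_copiesExpectation, ← integral_fintype_prod_eq_pow]
  rw [← integral_copiesExpectation (measurable_uncurry_prod_copiesKernel ha hb hw)
    (Integrable.fintype_prod (f := fun _ q ↦ |w q|) fun _ ↦ hwi.abs)
    (fun p ω ↦ by simp [norm_copiesKernel])]
  exact integral_re (integrable_copiesExpectation_prod_copiesKernel ha hb hw hwi)

lemma hasSum_integral_weightedGap (ha : Measurable (uncurry a)) (hb : Measurable (uncurry b))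
    (hw : Measurable w) (hwi : Integrable w ν) :
    HasSum (fun k : ℕ ↦
        (∫ p : Fin k → S, weightedGap ℙ a b w p ∂(Measure.pi fun _ ↦ ν)) / k.factorial)
      (copiesExpectation ℙ fun ω ↦ Complex.exp (∫ q, copiesKernel a b w q ω ∂ν)).re := by
  have hK : Measurable fun ω ↦ ∫ q, copiesKernel a b w q ω ∂ν :=
    (measurable_uncurry_copiesKernel ha hb hw).stronglyMeasurable.integral_prod_left'.measurable
  have hKC (ω : (Ω × Ω) × Ω × Ω) : ‖∫ q, copiesKernel a b w q ω ∂ν‖ ≤ ∫ q, |w q| ∂ν :=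
    norm_integral_le_of_norm_le hwi.abs (.of_forall fun q ↦ (norm_copiesKernel q ω).le)
  refine (Complex.hasSum_re (hasSum_copiesExpectation_pow_div_factorial hK hKC)).congr_fun
    fun k ↦ ?_
  rw [integral_weightedGap ha hb hw hwi, Fintype.card_fin]
  simp only [div_eq_mul_inv, copiesExpectation_mul_const]
  rw [← Complex.ofReal_natCast, ← Complex.ofReal_inv, Complex.re_mul_ofReal]

end Fields

section Processes

variable {Ω : Type*} {X Y : Ω → C(I, ℝ)} {g : ℝ → ℝ}

/-- The process `X` as a random field on `I × ℝ × ℝ`, whose points are triples `(x, s, t)`: the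
value `X x` times a frequency, which is `s` for `freq = Prod.fst` and `t` for `freq = Prod.snd`. -/
noncomputable def processField (X : Ω → C(I, ℝ)) (freq : ℝ × ℝ → ℝ) (q : I × ℝ × ℝ) (ω : Ω) : ℝ :=
  freq q.2 * X ω q.1

/-- The weight `g s * g t` of the point `(x, s, t)` in `distCov`. -/
noncomputable def pairWeight (g : ℝ → ℝ) (q : I × ℝ × ℝ) : ℝ :=
  g q.2.1 * g q.2.2

/-- The Fourier transform `∫ e^{isu} g(s) ds` of the weight `g`. -/
noncomputable def weightCF (g : ℝ → ℝ) (u : ℝ) : ℂ :=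
  ∫ s, expI (s * u) * g s

lemma pairWeight_nonneg (hg : ∀ s, 0 ≤ g s) (q : I × ℝ × ℝ) : 0 ≤ pairWeight g q :=
  mul_nonneg (hg _) (hg _)

lemma measurable_pairWeight (hg : Measurable g) : Measurable (pairWeight g) :=
  (hg.comp (by fun_prop)).mul (hg.comp (by fun_prop))

lemma integrable_pairWeight (hgi : Integrable g) : Integrable (pairWeight g) :=
  (hgi.mul_prod hgi).comp_snd _

lemma copiesKernel_processField (q : I × ℝ × ℝ) (ω : (Ω × Ω) × Ω × Ω) :
    copiesKernel (processField X Prod.fst) (processField Y Prod.snd) (pairWeight g) q ω =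
      (expI (q.2.1 * (X ω.1.1 q.1 - X ω.1.2 q.1)) * g q.2.1) *
        (expI (q.2.2 * (Y ω.2.1 q.1 - Y ω.2.2 q.1)) * g q.2.2) := by
  simp only [copiesKernel, processField, pairWeight, ← mul_sub, expI_add]
  push_cast
  ring

lemma exp_integral_weightCF_mul_weightCF_of_stable {P : Type*} [MeasurableSpace P] {μ : Measure P}
    {α : ℝ} (hg : ∀ u, weightCF g u = (Real.exp (-(|u| ^ α)) : ℝ)) (u v : P → ℝ) :
    Complex.exp (∫ p, weightCF g (u p) * weightCF g (v p) ∂μ) =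
      (Real.exp (∫ p, Real.exp (-(|u p| ^ α) - |v p| ^ α) ∂μ) : ℝ) := by
  simp only [hg, ← Complex.ofReal_mul, ← Real.exp_add, ← sub_eq_add_neg, integral_complex_ofReal,
    ← Complex.ofReal_exp]

variable [MeasurableSpace Ω] {ℙ : Measure Ω}

lemma jointCF_sub_margCF_mul_margCF {k : ℕ} (p : Fin k → I × ℝ × ℝ) :
    jointCF ℙ X Y (fun j ↦ (p j).1) (fun j ↦ (p j).2.1) (fun j ↦ (p j).2.2) -
        margCF ℙ X (fun j ↦ (p j).1) (fun j ↦ (p j).2.1) *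
          margCF ℙ Y (fun j ↦ (p j).1) (fun j ↦ (p j).2.2) =
      expICov ℙ (fun ω ↦ ∑ j, processField X Prod.fst (p j) ω)
        (fun ω ↦ ∑ j, processField Y Prod.snd (p j) ω) := by
  simp only [jointCF, margCF, expICov, expI, processField, Finset.sum_add_distrib]

variable [MeasurableSpace C(I, ℝ)] [BorelSpace C(I, ℝ)]

lemma measurable_uncurry_processField (hX : Measurable X) {freq : ℝ × ℝ → ℝ}
    (hfreq : Measurable freq) : Measurable (uncurry (processField X freq)) := by
  have heval : Measurable fun z : C(I, ℝ) × I ↦ z.1 z.2 := continuous_eval.measurable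
  exact (hfreq.comp (by fun_prop)).mul
    (heval.comp ((hX.comp measurable_snd).prodMk (measurable_fst.comp measurable_fst)))

lemma integral_copiesKernel_processField (hX : Measurable X) (hY : Measurable Y)
    (hg : Measurable g) (hgi : Integrable g) (ω : (Ω × Ω) × Ω × Ω) :
    ∫ q, copiesKernel (processField X Prod.fst) (processField Y Prod.snd) (pairWeight g) q ω =
      ∫ x, weightCF g (X ω.1.1 x - X ω.1.2 x) * weightCF g (Y ω.2.1 x - Y ω.2.2 x) := by
  have hmeas := measurable_uncurry_copiesKernel (measurable_uncurry_processField hX measurable_fst)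
    (measurable_uncurry_processField hY measurable_snd) (measurable_pairWeight hg)
  have hint : Integrable fun q ↦
      copiesKernel (processField X Prod.fst) (processField Y Prod.snd) (pairWeight g) q ω :=
    (integrable_pairWeight hgi).abs.mono' hmeas.of_uncurry_right.aestronglyMeasurable
      (.of_forall fun q ↦ (norm_copiesKernel q ω).le)
  rw [Measure.volume_eq_prod, integral_prod _ hint]
  refine integral_congr_ae (.of_forall fun x ↦ ?_)
  simp only [copiesKernel_processField, weightCF, Measure.volume_eq_prod, ← integral_prod_mul]

lemma lintegral_jointCF_sub_margCF_mul_margCF [IsFiniteMeasure ℙ] (hX : Measurable X)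
    (hY : Measurable Y) (hg : Measurable g) (hgi : Integrable g) (hg_nonneg : ∀ s, 0 ≤ g s)
    (k : ℕ) :
    ∫⁻ (x : Fin k → I), ∫⁻ (s : Fin k → ℝ), ∫⁻ (t : Fin k → ℝ),
        ENNReal.ofReal (‖jointCF ℙ X Y x s t - margCF ℙ X x s * margCF ℙ Y x t‖ ^ 2 *
          ∏ j, g (s j) * g (t j)) =
      ENNReal.ofReal (∫ p : Fin k → I × ℝ × ℝ,
        weightedGap ℙ (processField X Prod.fst) (processField Y Prod.snd) (pairWeight g) p) := by
  have hXf := measurable_uncurry_processField hX measurable_fst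
  have hYf := measurable_uncurry_processField hY measurable_snd
  have hmeas := (measurable_weightedGap (ℙ := ℙ) (ι := Fin k) hXf hYf
    (measurable_pairWeight hg)).ennreal_ofReal
  simp only [volume_pi]
  rw [ofReal_integral_eq_lintegral_ofReal
    (integrable_weightedGap hXf hYf (measurable_pairWeight hg) (integrable_pairWeight hgi))
    (.of_forall fun p ↦ weightedGap_nonneg (pairWeight_nonneg hg_nonneg) p)]
  refine .trans ?_ (lintegral_pi_prod_prod hmeas).symm
  simp only [weightedGap, ← jointCF_sub_margCF_mul_margCF, pairWeight]

theorem distCov_stable_representation_general [IsProbabilityMeasure ℙ] (hX : Measurable X)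
    (hY : Measurable Y) (hg : Measurable g) (hgi : Integrable g) (hg_nonneg : ∀ s, 0 ≤ g s) :
    (distCov ℙ X Y g).toReal = Real.exp (-1) * (copiesExpectation ℙ fun ω ↦ Complex.exp
      (∫ x, weightCF g (X ω.1.1 x - X ω.1.2 x) * weightCF g (Y ω.2.1 x - Y ω.2.2 x))).re := by
  have hsum := hasSum_integral_weightedGap (ℙ := ℙ)
    (measurable_uncurry_processField hX measurable_fst)
    (measurable_uncurry_processField hY measurable_snd)
    (measurable_pairWeight hg) (integrable_pairWeight hgi)
  simp only [integral_copiesKernel_processField hX hY hg hgi] at hsum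
  have htail := (hasSum_nat_add_iff' 1).2 hsum
  simp only [Finset.range_one, Finset.sum_singleton, weightedGap_of_isEmpty, integral_zero,
    zero_div, sub_zero] at htail
  rw [distCov]
  simp only [lintegral_jointCF_sub_margCF_mul_margCF hX hY hg hgi hg_nonneg]
  rw [ENNReal.tsum_toReal_eq fun k ↦ ENNReal.mul_ne_top ENNReal.ofReal_ne_top ENNReal.ofReal_ne_top]
  refine ((htail.mul_left (Real.exp (-1))).congr_fun fun k ↦ ?_).tsum_eq
  rw [ENNReal.toReal_mul, ENNReal.toReal_ofReal (by positivity), ENNReal.toReal_ofReal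
    (integral_nonneg (weightedGap_nonneg (pairWeight_nonneg hg_nonneg))), volume_pi]
  ring

end Processes

/-- If `g` is the density of a suitably scaled symmetric `α`-stable law,
i.e. `∫ e^{isu} g(s) ds = e^{−|u|^α}`, then (with independent copies realized on product
spaces as indicated by the coordinates)
`d_g(X,Y) = e⁻¹ (E[exp(∫₀¹ e^{−|X−X'|^α−|Y−Y'|^α})] + E[exp(∫₀¹ e^{−|X−X'|^α−|Y''−Y'''|^α})]
− 2 E[exp(∫₀¹ e^{−|X−X'|^α−|Y−Y''|^α})])`. -/
theorem distCov_stable_representation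
    {Ω : Type*} [MeasurableSpace Ω] (ℙ : Measure Ω) [IsProbabilityMeasure ℙ]
    [MeasurableSpace C(I, ℝ)] [BorelSpace C(I, ℝ)]
    (X Y : Ω → C(I, ℝ)) (hX : Measurable X) (hY : Measurable Y)
    (α : ℝ) (hα : α ∈ Set.Ioc 0 2)
    (g : ℝ → ℝ) (hg : Measurable g) (hg_nonneg : ∀ s, 0 ≤ g s)
    (hg_int : (∫ s, g s) = 1)
    (hg_stable : ∀ u : ℝ,
      (∫ s : ℝ, Complex.exp (Complex.I * ((s * u : ℝ) : ℂ)) * (g s : ℂ))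
        = ((Real.exp (-(|u| ^ α)) : ℝ) : ℂ)) :
    (distCov ℙ X Y g).toReal =
      Real.exp (-1) *
        ((∫ ω : Ω × Ω,
            Real.exp (∫ x : I,
              Real.exp (-(|X ω.1 x - X ω.2 x| ^ α) - |Y ω.1 x - Y ω.2 x| ^ α))
            ∂(ℙ.prod ℙ))
        + (∫ ω : (Ω × Ω) × Ω × Ω,
            Real.exp (∫ x : I,
              Real.exp (-(|X ω.1.1 x - X ω.1.2 x| ^ α) - |Y ω.2.1 x - Y ω.2.2 x| ^ α))
            ∂((ℙ.prod ℙ).prod (ℙ.prod ℙ)))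
        - 2 * (∫ ω : Ω × Ω × Ω,
            Real.exp (∫ x : I,
              Real.exp (-(|X ω.1 x - X ω.2.1 x| ^ α) - |Y ω.1 x - Y ω.2.2 x| ^ α))
            ∂(ℙ.prod (ℙ.prod ℙ)))) := by
  have hgi : Integrable g := .of_integral_ne_zero (by simp [hg_int])
  rw [distCov_stable_representation_general hX hY hg hgi hg_nonneg,
    funext fun ω ↦ exp_integral_weightCF_mul_weightCF_of_stable hg_stable _ _,
    copiesExpectation_ofReal, Complex.ofReal_re, copiesExpectation]
end
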